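/- Assume (H4.1) and (H4.2), and let K be a Lipschitz constant of f(t,x,·,·) in (y,z), uniform in (t,x,u,v). Let u₁ ∈ Θ be a viscosity subsolution and u₂ ∈ Θ a viscosity supersolution of the Isaacs equation ∂_t w + H⁻(t,x,w,Dw,D²w) = 0 on [0,T)×ℝⁿ with terminal condition w(T,x) = Φ(x). Then the function ω := u₁ − u₂ is a viscosity subsolution of the equation ∂_t ω(t,x) + sup_{u∈U, v∈V} { (1/2)·tr(σσᵀ(t,x,u,v)·D²ω) + Dω·b(t,x,u,v) + K|ω| + K|Dω·σ(t,x,u,v)| } = 0 on [0,T)×ℝⁿ with terminal condition ω(T,x) = 0, x ∈ ℝⁿ (here Dω·σ(t,x,u,v) ∈ ℝᵈ is the row vector (Dω)ᵀσ(t,x,u,v) and |·| its Euclidean norm). -/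

import Mathlib

noncomputable section

open scoped RealInnerProductSpace Matrix

attribute [local instance] Matrix.frobeniusNormedAddCommGroup

/-- The Euclidean state space `ℝⁿ`. -/
abbrev Eucl (n : ℕ) := EuclideanSpace ℝ (Fin n)

/-- Time derivative `∂φ/∂t (t,x)` of a function `φ : ℝ × ℝⁿ → ℝ`. -/
def timeDeriv {n : ℕ} (φ : ℝ → Eucl n → ℝ) (t : ℝ) (x : Eucl n) : ℝ :=
  deriv (fun s => φ s x) t

/-- Spatial gradient `Dφ(t,x) ∈ ℝⁿ`. -/
def spaceGrad {n : ℕ} (φ : ℝ → Eucl n → ℝ) (t : ℝ) (x : Eucl n) : Eucl n :=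
  gradient (fun y => φ t y) x

/-- Spatial Hessian `D²φ(t,x)` as an `n × n` matrix. -/
def spaceHess {n : ℕ} (φ : ℝ → Eucl n → ℝ) (t : ℝ) (x : Eucl n) :
    Matrix (Fin n) (Fin n) ℝ :=
  Matrix.of fun i j =>
    fderiv ℝ (fun y => fderiv ℝ (fun y' => φ t y') y (EuclideanSpace.single j (1 : ℝ))) x
      (EuclideanSpace.single i (1 : ℝ))

/-- The row vector `pᵀσ ∈ ℝᵈ`. -/
def rowMul {n d : ℕ} (p : Eucl n) (M : Matrix (Fin n) (Fin d) ℝ) : Eucl d :=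
  (WithLp.equiv 2 (Fin d → ℝ)).symm fun j => ∑ i, p i * M i j

/-- `φ ∈ C³_{l,b}([0,T]×ℝⁿ)`: three times continuously differentiable with all
derivatives of order 1 to 3 bounded. -/
def IsTestFunction {n : ℕ} (φ : ℝ → Eucl n → ℝ) : Prop :=
  ContDiff ℝ 3 (fun p : ℝ × Eucl n => φ p.1 p.2) ∧
  ∀ i : ℕ, 1 ≤ i → i ≤ 3 →
    ∃ M : ℝ, ∀ p : ℝ × Eucl n,
      ‖iteratedFDeriv ℝ i (fun q : ℝ × Eucl n => φ q.1 q.2) p‖ ≤ M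

/-- Viscosity subsolution of `∂_t w + G(t,x,w,Dw,D²w) = 0` on `[0,T)×ℝⁿ`
with terminal condition `w(T,·) = g`. -/
def IsViscositySubsolution {n : ℕ} (T : ℝ)
    (G : ℝ → Eucl n → ℝ → Eucl n → Matrix (Fin n) (Fin n) ℝ → ℝ)
    (g : Eucl n → ℝ) (w : ℝ → Eucl n → ℝ) : Prop :=
  (∀ x : Eucl n, w T x ≤ g x) ∧
  ∀ φ : ℝ → Eucl n → ℝ, IsTestFunction φ →
    ∀ t ∈ Set.Ico (0 : ℝ) T, ∀ x : Eucl n,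
      IsLocalMaxOn (fun p : ℝ × Eucl n => w p.1 p.2 - φ p.1 p.2)
        (Set.Icc (0 : ℝ) T ×ˢ (Set.univ : Set (Eucl n))) (t, x) →
      0 ≤ timeDeriv φ t x + G t x (φ t x) (spaceGrad φ t x) (spaceHess φ t x)

/-- Viscosity supersolution of `∂_t w + G(t,x,w,Dw,D²w) = 0` on `[0,T)×ℝⁿ`
with terminal condition `w(T,·) = g`. -/
def IsViscositySupersolution {n : ℕ} (T : ℝ)
    (G : ℝ → Eucl n → ℝ → Eucl n → Matrix (Fin n) (Fin n) ℝ → ℝ)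
    (g : Eucl n → ℝ) (w : ℝ → Eucl n → ℝ) : Prop :=
  (∀ x : Eucl n, g x ≤ w T x) ∧
  ∀ φ : ℝ → Eucl n → ℝ, IsTestFunction φ →
    ∀ t ∈ Set.Ico (0 : ℝ) T, ∀ x : Eucl n,
      IsLocalMinOn (fun p : ℝ × Eucl n => w p.1 p.2 - φ p.1 p.2)
        (Set.Icc (0 : ℝ) T ×ˢ (Set.univ : Set (Eucl n))) (t, x) →
      timeDeriv φ t x + G t x (φ t x) (spaceGrad φ t x) (spaceHess φ t x) ≤ 0

/-- Viscosity solution: both a sub- and a supersolution. -/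
def IsViscositySolution {n : ℕ} (T : ℝ)
    (G : ℝ → Eucl n → ℝ → Eucl n → Matrix (Fin n) (Fin n) ℝ → ℝ)
    (g : Eucl n → ℝ) (w : ℝ → Eucl n → ℝ) : Prop :=
  IsViscositySubsolution T G g w ∧ IsViscositySupersolution T G g w

/-- The lower Hamiltonian `H⁻`. -/
def lowerHamiltonian {n d : ℕ} {U V : Type*}
    (b : ℝ → Eucl n → U → V → Eucl n)
    (σ : ℝ → Eucl n → U → V → Matrix (Fin n) (Fin d) ℝ)
    (f : ℝ → Eucl n → ℝ → Eucl d → U → V → ℝ)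
    (t : ℝ) (x : Eucl n) (y : ℝ) (p : Eucl n) (X : Matrix (Fin n) (Fin n) ℝ) : ℝ :=
  ⨆ u : U, ⨅ v : V,
    (1 / 2) * Matrix.trace (σ t x u v * (σ t x u v)ᵀ * X)
      + ⟪p, b t x u v⟫
      + f t x y (rowMul p (σ t x u v)) u v

/-- The upper Hamiltonian `H⁺`. -/
def upperHamiltonian {n d : ℕ} {U V : Type*}
    (b : ℝ → Eucl n → U → V → Eucl n)
    (σ : ℝ → Eucl n → U → V → Matrix (Fin n) (Fin d) ℝ)
    (f : ℝ → Eucl n → ℝ → Eucl d → U → V → ℝ)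
    (t : ℝ) (x : Eucl n) (y : ℝ) (p : Eucl n) (X : Matrix (Fin n) (Fin n) ℝ) : ℝ :=
  ⨅ v : V, ⨆ u : U,
    (1 / 2) * Matrix.trace (σ t x u v * (σ t x u v)ᵀ * X)
      + ⟪p, b t x u v⟫
      + f t x y (rowMul p (σ t x u v)) u v

/-- Membership in the class `Θ` of continuous functions on `[0,T]×ℝⁿ` satisfying the
growth condition `φ(t,x)·exp{−Ã[log((|x|²+1)^{1/2})]²} → 0` as `|x| → ∞`,
uniformly in `t ∈ [0,T]`. -/
def MemTheta {n : ℕ} (T : ℝ) (φ : ℝ → Eucl n → ℝ) : Prop :=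
  ContinuousOn (fun p : ℝ × Eucl n => φ p.1 p.2)
      (Set.Icc (0 : ℝ) T ×ˢ (Set.univ : Set (Eucl n))) ∧
  ∃ A : ℝ, 0 < A ∧ ∀ ε > (0 : ℝ), ∃ R : ℝ, ∀ t ∈ Set.Icc (0 : ℝ) T, ∀ x : Eucl n,
    R ≤ ‖x‖ →
      |φ t x| * Real.exp (-A * (Real.log ((‖x‖ ^ 2 + 1) ^ ((1 : ℝ) / 2))) ^ 2) ≤ ε

section Regularization

variable {F : Type*} [NormedAddCommGroup F] [InnerProductSpace ℝ F]

theorem parallel_sum_le {m k l : ℝ} (hmk : 0 < m + k) (hl : l * (m + k) = m * k) (p q : F) :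
    l * ‖p + q‖ ^ 2 ≤ m * ‖p‖ ^ 2 + k * ‖q‖ ^ 2 := by
  have h1 : ‖m • p - k • q‖ ^ 2 = m ^ 2 * ‖p‖ ^ 2 - 2 * (m * k * ⟪p, q⟫) + k ^ 2 * ‖q‖ ^ 2 := by
    rw [norm_sub_sq_real, norm_smul, norm_smul, mul_pow, mul_pow, Real.norm_eq_abs,
      Real.norm_eq_abs, sq_abs, sq_abs, inner_smul_left, inner_smul_right]
    simp only [conj_trivial]
    ring
  have h2 : ‖p + q‖ ^ 2 = ‖p‖ ^ 2 + 2 * ⟪p, q⟫ + ‖q‖ ^ 2 := norm_add_sq_real p q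
  have h3 : (m + k) * (m * ‖p‖ ^ 2 + k * ‖q‖ ^ 2 - l * ‖p + q‖ ^ 2) = ‖m • p - k • q‖ ^ 2 := by
    rw [h1, h2]
    linear_combination (-(‖p‖ ^ 2 + 2 * ⟪p, q⟫ + ‖q‖ ^ 2)) * hl
  have h4 : 0 ≤ m * ‖p‖ ^ 2 + k * ‖q‖ ^ 2 - l * ‖p + q‖ ^ 2 := by
    refine (mul_nonneg_iff_of_pos_left hmk).1 ?_
    rw [h3]; positivity
  linarith

theorem exists_parallel_sum_eq {m k l : ℝ} (hmk : 0 < m + k) (hl : l * (m + k) = m * k) (a y : F) :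
    ∃ x : F, m * ‖a - x‖ ^ 2 + k * ‖x - y‖ ^ 2 = l * ‖a - y‖ ^ 2 := by
  refine ⟨y + (m / (m + k)) • (a - y), ?_⟩
  have h1 : a - (y + (m / (m + k)) • (a - y)) = (k / (m + k)) • (a - y) := by
    have : k / (m + k) = 1 - m / (m + k) := by field_simp; ring
    rw [this]; module
  rw [h1, add_sub_cancel_left, norm_smul, norm_smul, mul_pow, mul_pow, Real.norm_eq_abs,
    Real.norm_eq_abs, sq_abs, sq_abs]
  have : l = m * k / (m + k) := by field_simp; linarith
  rw [this]
  field_simp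
  ring

variable [FiniteDimensional ℝ F]

/-- Minimizers of `y ↦ c y + s/2 ‖y‖² - k ⟪x, y⟫` for a midpoint convex `c`. -/
theorem exists_minimizer_growth {c : F → ℝ} (hc : Continuous c)
    (hmid : ∀ y y', c ((1 / 2 : ℝ) • (y + y')) ≤ (c y + c y') / 2)
    {w : F} {r : ℝ} (hlow : ∀ y, ⟪w, y⟫ + r ≤ c y) {s k : ℝ} (hs : 0 < s) (x : F) :
    ∃ y, ∀ y', c y + s / 2 * ‖y‖ ^ 2 - k * ⟪x, y⟫ + s / 4 * ‖y' - y‖ ^ 2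
      ≤ c y' + s / 2 * ‖y'‖ ^ 2 - k * ⟪x, y'⟫ := by
  set S : F → ℝ := fun y => c y + s / 2 * ‖y‖ ^ 2 - k * ⟪x, y⟫ with hS
  have hScont : Continuous S := by fun_prop
  have hlim : Filter.Tendsto S (Filter.cocompact F) Filter.atTop := by
    have h0 : Filter.Tendsto (fun y : F => ‖y‖ * (s / 2 * ‖y‖ - ‖w - k • x‖) + r)
        (Filter.cocompact F) Filter.atTop := by
      refine Filter.tendsto_atTop_add_const_right _ _ ?_
      refine (tendsto_norm_cocompact_atTop (E := F)).atTop_mul_atTop₀ ?_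
      refine Filter.tendsto_atTop_add_const_right _ _ ?_
      exact (tendsto_norm_cocompact_atTop (E := F)).const_mul_atTop (by positivity)
    refine Filter.tendsto_atTop_mono (fun y => ?_) h0
    have h1 := hlow y
    have h2 : ⟪w - k • x, y⟫ = ⟪w, y⟫ - k * ⟪x, y⟫ := by
      rw [inner_sub_left, inner_smul_left]; simp
    have h3 : -(‖w - k • x‖ * ‖y‖) ≤ ⟪w - k • x, y⟫ :=
      neg_le_of_abs_le (abs_real_inner_le_norm _ _)
    simp only [hS]
    nlinarith
  obtain ⟨y, hy⟩ := hScont.exists_forall_le hlim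
  refine ⟨y, fun y' => ?_⟩
  have h1 := hy ((1 / 2 : ℝ) • (y + y'))
  have h2 := hmid y y'
  have h3 : ‖(1 / 2 : ℝ) • (y + y')‖ ^ 2 = (‖y‖ ^ 2 + ‖y'‖ ^ 2) / 2 - ‖y' - y‖ ^ 2 / 4 := by
    rw [norm_smul, mul_pow, norm_add_sq_real, norm_sub_sq_real, real_inner_comm]
    norm_num
    ring
  have h4 : ⟪x, (1 / 2 : ℝ) • (y + y')⟫ = (⟪x, y⟫ + ⟪x, y'⟫) / 2 := by
    rw [inner_smul_right, inner_add_right]; ring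
  simp only [hS, h3, h4] at h1
  nlinarith

/-- A two-sided (`C^{1,1}`) regularization of a function on a compact set. -/
theorem exists_regularization {Q : Set F} (hQ : IsCompact Q) (hQn : Q.Nonempty) {u : F → ℝ}
    (hu : ContinuousOn u Q) {m k l : ℝ} (hm : 0 < m) (hk : 0 < k) (hl : l * (m + k) = m * k) :
    ∃ (h : F → ℝ) (g : F → F) (L : NNReal), (∀ x, HasGradientAt h (g x) x) ∧ LipschitzWith L g ∧
      (∀ a ∈ Q, ∀ x, u a ≤ h x + m / 2 * ‖a - x‖ ^ 2) ∧
      ∀ x y, ∃ a ∈ Q, h x ≤ u a - l / 2 * ‖a - y‖ ^ 2 + k / 2 * ‖x - y‖ ^ 2 := by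
  have hmk : 0 < m + k := by positivity
  have hlk : 0 < k - l := by
    have : (k - l) * (m + k) = k ^ 2 := by linear_combination (-1 : ℝ) * hl
    exact pos_of_mul_pos_left (this ▸ by positivity) hmk.le
  have hmax : ∀ y : F, ∃ a ∈ Q, ∀ a' ∈ Q, u a' - l / 2 * ‖a' - y‖ ^ 2 ≤ u a - l / 2 * ‖a - y‖ ^ 2 := by
    intro y
    have hc : ContinuousOn (fun a => u a - l / 2 * ‖a - y‖ ^ 2) Q :=
      hu.sub (by fun_prop)
    obtain ⟨a, ha, h⟩ := hQ.exists_isMaxOn hQn hc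
    exact ⟨a, ha, fun a' ha' => h ha'⟩
  choose α hαQ hα using hmax
  set c : F → ℝ := fun y => u (α y) - l / 2 * ‖α y - y‖ ^ 2 + l / 2 * ‖y‖ ^ 2 with hc
  have hexp : ∀ a y : F, l / 2 * ‖a - y‖ ^ 2 = l / 2 * ‖a‖ ^ 2 - l * ⟪a, y⟫ + l / 2 * ‖y‖ ^ 2 := by
    intro a y; rw [norm_sub_sq_real]; ring
  have hceq : ∀ y, c y = u (α y) - l / 2 * ‖α y‖ ^ 2 + l * ⟪α y, y⟫ := by
    intro y; simp only [hc, hexp]; ring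
  have hcle : ∀ a ∈ Q, ∀ y, u a - l / 2 * ‖a‖ ^ 2 + l * ⟪a, y⟫ ≤ c y := by
    intro a ha y
    have := hα y a ha
    rw [hexp a y] at this
    simp only [hc]; linarith
  obtain ⟨R, hR⟩ := hQ.isBounded.exists_norm_le
  have hclip : ∀ y y', c y - c y' ≤ |l| * R * ‖y - y'‖ := by
    intro y y'
    have h1 := hcle (α y) (hαQ y) y'
    have h2 : ⟪α y, y - y'⟫ = ⟪α y, y⟫ - ⟪α y, y'⟫ := inner_sub_right _ _ _
    have h3 : |l * ⟪α y, y - y'⟫| ≤ |l| * (R * ‖y - y'‖) := by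
      rw [abs_mul]
      gcongr
      exact (abs_real_inner_le_norm _ _).trans (by gcongr; exact hR _ (hαQ y))
    have h4 := le_of_abs_le h3
    rw [hceq y]
    rw [h2] at h4
    nlinarith
  have hccont : Continuous c := by
    refine (LipschitzWith.of_dist_le' (K := |l| * R) fun y y' => ?_).continuous
    rw [Real.dist_eq, dist_eq_norm, abs_le]
    have h1 := hclip y y'
    have h2 := hclip y' y
    rw [norm_sub_rev] at h2
    constructor <;> linarith
  have hmid : ∀ y y', c ((1 / 2 : ℝ) • (y + y')) ≤ (c y + c y') / 2 := by
    intro y y'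
    rw [hceq]
    set a := α ((1 / 2 : ℝ) • (y + y'))
    have h1 := hcle a (hαQ _) y
    have h2 := hcle a (hαQ _) y'
    rw [inner_smul_right, inner_add_right]
    linarith
  obtain ⟨a₀, ha₀⟩ := hQn
  have hlow : ∀ y, ⟪l • a₀, y⟫ + (u a₀ - l / 2 * ‖a₀‖ ^ 2) ≤ c y := by
    intro y
    have := hcle a₀ ha₀ y
    rw [inner_smul_left]; simp only [conj_trivial]; linarith
  have hmin := fun x => exists_minimizer_growth hccont hmid hlow hlk (k := k) x
  choose Y hY using hmin
  set S : F → F → ℝ := fun x y => c y - l / 2 * ‖y‖ ^ 2 + k / 2 * ‖x - y‖ ^ 2 with hS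
  have hSeq : ∀ x y, S x y = c y + (k - l) / 2 * ‖y‖ ^ 2 - k * ⟪x, y⟫ + k / 2 * ‖x‖ ^ 2 := by
    intro x y; simp only [hS]; rw [norm_sub_sq_real]; ring
  have hYS : ∀ x y, S x (Y x) + (k - l) / 4 * ‖y - Y x‖ ^ 2 ≤ S x y := by
    intro x y
    have := hY x y
    rw [hSeq, hSeq]; linarith
  have hSdiff : ∀ x x' y, S x' y - S x y = k * ⟪x - y, x' - x⟫ + k / 2 * ‖x' - x‖ ^ 2 := by
    intro x x' y
    simp only [hS]
    have : x' - y = (x - y) + (x' - x) := by abel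
    rw [this, norm_add_sq_real]; ring
  have hYlip : ∀ x x', ‖Y x' - Y x‖ ≤ 2 * k / (k - l) * ‖x' - x‖ := by
    intro x x'
    have h1 := hYS x (Y x')
    have h2 := hYS x' (Y x)
    have h3 := hSdiff x x' (Y x)
    have h4 := hSdiff x x' (Y x')
    have h5 : ⟪x - Y x, x' - x⟫ - ⟪x - Y x', x' - x⟫ = ⟪Y x' - Y x, x' - x⟫ := by
      rw [← inner_sub_left]; congr 1; abel
    have h6 := real_inner_le_norm (Y x' - Y x) (x' - x)
    have h7 : (k - l) / 2 * ‖Y x' - Y x‖ ^ 2 ≤ k * (‖Y x' - Y x‖ * ‖x' - x‖) := by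
      rw [norm_sub_rev (Y x) (Y x')] at h2
      nlinarith
    rcases (norm_nonneg (Y x' - Y x)).eq_or_lt with h0 | h0
    · rw [← h0]; positivity
    · have h8 : (k - l) / 2 * ‖Y x' - Y x‖ ≤ k * ‖x' - x‖ := by
        refine le_of_mul_le_mul_right ?_ h0
        nlinarith
      rw [div_mul_eq_mul_div, le_div_iff₀ hlk]
      linarith
  set C : ℝ := 2 * k / (k - l) with hC
  have hC0 : 0 ≤ C := by positivity
  refine ⟨fun x => S x (Y x), fun x => k • (x - Y x), Real.toNNReal (k * (1 + C)), ?_, ?_, ?_, ?_⟩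
  · intro x
    rw [hasGradientAt_iff_isLittleO]
    refine Asymptotics.IsBigO.trans_isLittleO (g := fun x' => ‖x' - x‖ ^ 2) ?_ ?_
    · refine Asymptotics.IsBigO.of_bound (k / 2 + k * (1 + C)) (Filter.Eventually.of_forall fun x' => ?_)
      have hup : S x' (Y x') - S x (Y x) ≤ k * ⟪x - Y x, x' - x⟫ + k / 2 * ‖x' - x‖ ^ 2 := by
        have h1 := hYS x' (Y x)
        have h3 := hSdiff x x' (Y x)
        have : 0 ≤ (k - l) / 4 * ‖Y x - Y x'‖ ^ 2 := by positivity
        linarith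
      have hlo : k * ⟪x - Y x, x' - x⟫ - k * C * ‖x' - x‖ ^ 2 ≤ S x' (Y x') - S x (Y x) := by
        have h1 := hYS x (Y x')
        have h3 := hSdiff x x' (Y x')
        have h4 : 0 ≤ (k - l) / 4 * ‖Y x' - Y x‖ ^ 2 := by positivity
        have h5 : ⟪x - Y x, x' - x⟫ - ⟪x - Y x', x' - x⟫ = ⟪Y x' - Y x, x' - x⟫ := by
          rw [← inner_sub_left]; congr 1; abel
        have h6 := real_inner_le_norm (Y x' - Y x) (x' - x)
        have h7 : ‖Y x' - Y x‖ * ‖x' - x‖ ≤ C * ‖x' - x‖ ^ 2 := by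
          rw [pow_two, ← mul_assoc]; gcongr; exact hYlip x x'
        have h8 : 0 ≤ k / 2 * ‖x' - x‖ ^ 2 := by positivity
        nlinarith
      simp only [Real.norm_eq_abs, abs_pow, abs_norm]
      rw [inner_smul_left]
      simp only [conj_trivial]
      have h9 : 0 ≤ k * ‖x' - x‖ ^ 2 := by positivity
      have h10 : 0 ≤ k * C * ‖x' - x‖ ^ 2 := by positivity
      rw [abs_le]; constructor <;> nlinarith
    · exact Asymptotics.isLittleO_norm_right.1 (Asymptotics.isLittleO_norm_norm.1 (by
        simpa using (Asymptotics.isLittleO_pow_sub_sub x (one_lt_two)).norm_norm))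
  · refine LipschitzWith.of_dist_le' fun x x' => ?_
    rw [dist_eq_norm, dist_eq_norm, ← smul_sub, norm_smul, Real.norm_eq_abs, abs_of_pos hk, mul_assoc]
    gcongr
    have h1 : x - Y x - (x' - Y x') = (x - x') - (Y x - Y x') := by abel
    rw [h1]
    refine (norm_sub_le _ _).trans ?_
    have := hYlip x' x
    linarith
  · intro a ha x
    have h1 := hα (Y x) a ha
    have h2 := parallel_sum_le hmk hl (a - x) (x - Y x)
    rw [sub_add_sub_cancel] at h2
    simp only [hS, hc]
    linarith
  · intro x y
    refine ⟨α y, hαQ y, ?_⟩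
    have h1 := hYS x y
    have h2 : 0 ≤ (k - l) / 4 * ‖y - Y x‖ ^ 2 := by positivity
    have h3 : S x y = u (α y) - l / 2 * ‖α y - y‖ ^ 2 + k / 2 * ‖x - y‖ ^ 2 := by
      simp only [hS, hc]; ring
    simp only; linarith

end Regularization

section Sums

variable {F : Type*} [NormedAddCommGroup F] [InnerProductSpace ℝ F]

/-- Second order Taylor expansion at a point of differentiability of the gradient. -/
theorem taylor_two_of_hasFDerivAt_gradient [CompleteSpace F] {h : F → ℝ} {g : F → F}
    (hg : ∀ x, HasGradientAt h (g x) x) {x : F} {A : F →L[ℝ] F} (hA : HasFDerivAt g A x)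
    {ε : ℝ} (hε : 0 < ε) :
    ∀ᶠ e in nhds (0 : F), |h (x + e) - h x - ⟪g x, e⟫ - 1 / 2 * ⟪A e, e⟫| ≤ ε * ‖e‖ ^ 2 := by
  have h1 := (hasFDerivAt_iff_isLittleO_nhds_zero.1 hA).def hε
  obtain ⟨δ, hδ, hball⟩ := Metric.eventually_nhds_iff.1 h1
  refine Metric.eventually_nhds_iff.2 ⟨δ, hδ, fun e he => ?_⟩
  set ψ : ℝ → ℝ := fun t => h (x + t • e) - t * ⟪g x, e⟫ - t ^ 2 / 2 * ⟪A e, e⟫ with hψ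
  have hderiv : ∀ t ∈ Set.Icc (0 : ℝ) 1, HasDerivWithinAt ψ
      (⟪g (x + t • e), e⟫ - ⟪g x, e⟫ - t * ⟪A e, e⟫) (Set.Icc 0 1) t := by
    intro t _
    refine HasDerivAt.hasDerivWithinAt ?_
    have hl : HasDerivAt (fun t : ℝ => x + t • e) e t := by
      simpa using ((hasDerivAt_id t).smul_const e).const_add x
    have h2 : HasDerivAt (fun t : ℝ => h (x + t • e)) ⟪g (x + t • e), e⟫ t := by
      exact ((hg (x + t • e)).hasFDerivAt.comp_hasDerivAt t hl).congr_deriv (by simp)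
    have h3 : HasDerivAt (fun t : ℝ => t * ⟪g x, e⟫) ⟪g x, e⟫ t := by
      simpa using (hasDerivAt_id t).mul_const ⟪g x, e⟫
    have h4 : HasDerivAt (fun t : ℝ => t ^ 2 / 2 * ⟪A e, e⟫) (t * ⟪A e, e⟫) t := by
      refine (((hasDerivAt_pow 2 t).div_const 2).mul_const ⟪A e, e⟫).congr_deriv ?_
      norm_num
    exact (h2.sub h3).sub h4
  have hbound : ∀ t ∈ Set.Ico (0 : ℝ) 1,
      ‖⟪g (x + t • e), e⟫ - ⟪g x, e⟫ - t * ⟪A e, e⟫‖ ≤ ε * ‖e‖ ^ 2 := by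
    intro t ht
    have hte : ‖t • e‖ ≤ ‖e‖ := by
      rw [norm_smul, Real.norm_eq_abs, abs_of_nonneg ht.1]
      exact mul_le_of_le_one_left (norm_nonneg _) ht.2.le
    have h2 := hball (y := t • e) (by
      rw [dist_zero_right] at he ⊢; exact hte.trans_lt he)
    have h3 : ⟪g (x + t • e), e⟫ - ⟪g x, e⟫ - t * ⟪A e, e⟫ = ⟪g (x + t • e) - g x - A (t • e), e⟫ := by
      rw [inner_sub_left, inner_sub_left, map_smul, inner_smul_left]; simp
    rw [h3]
    refine (norm_inner_le_norm _ _).trans ?_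
    calc _ ≤ (ε * ‖t • e‖) * ‖e‖ := by gcongr
      _ ≤ (ε * ‖e‖) * ‖e‖ := by gcongr
      _ = _ := by ring
  have h5 := norm_image_sub_le_of_norm_deriv_le_segment_01' hderiv hbound
  simp only [hψ, Real.norm_eq_abs, one_smul, zero_smul, add_zero] at h5
  convert h5 using 2
  ring

/-- The doubled functional with quadratic penalties and a linear perturbation. -/
def penalized (u v : F → ℝ) (B : F →L[ℝ] F) (m : ℝ) (p₁ p₂ a b α β : F) : ℝ :=
  u a + v b - m / 2 * ‖a - α‖ ^ 2 - m / 2 * ‖b - β‖ ^ 2 - 1 / 2 * ⟪B (α - β), α - β⟫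
    - ⟪p₁, α⟫ - ⟪p₂, β⟫

theorem penalized_diag (u v : F → ℝ) (B : F →L[ℝ] F) (m : ℝ) (p₁ p₂ z : F) :
    penalized u v B m p₁ p₂ z z z z = u z + v z - ⟪p₁, z⟫ - ⟪p₂, z⟫ := by
  simp [penalized]

variable {Q : Set F} {u v : F → ℝ} {B : F →L[ℝ] F} {m M R : ℝ}

theorem penalized_bound (hB : ∀ x, 0 ≤ ⟪B x, x⟫) (hm : 0 < m)
    (hR : ∀ a ∈ Q, ‖a‖ ≤ R) (hu : ∀ a ∈ Q, |u a| ≤ M) (hv : ∀ a ∈ Q, |v a| ≤ M)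
    {p₁ p₂ : F} (hp₁ : ‖p₁‖ ≤ 1) (hp₂ : ‖p₂‖ ≤ 1) {a b z α β : F} (ha : a ∈ Q) (hb : b ∈ Q)
    (hz : z ∈ Q) (h : penalized u v B m p₁ p₂ z z z z ≤ penalized u v B m p₁ p₂ a b α β) :
    ‖a - α‖ ≤ 1 + 4 * (4 * M + 4 * R + 2 / m) / m ∧
      ‖b - β‖ ≤ 1 + 4 * (4 * M + 4 * R + 2 / m) / m := by
  have key : ∀ p a α : F, ‖p‖ ≤ 1 → a ∈ Q →
      ⟪p, z⟫ - ⟪p, α⟫ ≤ m / 4 * ‖a - α‖ ^ 2 + 1 / m + 2 * R := by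
    intro p a α hp ha
    have h1 : ⟪p, z⟫ - ⟪p, α⟫ = ⟪p, z - α⟫ := (inner_sub_right _ _ _).symm
    have h2 : ‖z - α‖ ≤ ‖z‖ + ‖a‖ + ‖a - α‖ := by
      have : z - α = z - a + (a - α) := by abel
      rw [this]
      exact (norm_add_le _ _).trans (by gcongr; exact norm_sub_le _ _)
    have h3 : ‖p‖ * ‖z - α‖ ≤ ‖z - α‖ := mul_le_of_le_one_left (norm_nonneg _) hp
    have h4 : ‖a - α‖ ≤ m / 4 * ‖a - α‖ ^ 2 + 1 / m := by
      have h5 : 0 ≤ (m * ‖a - α‖ - 2) ^ 2 / (4 * m) := by positivity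
      have h6 : (m * ‖a - α‖ - 2) ^ 2 / (4 * m) = m / 4 * ‖a - α‖ ^ 2 + 1 / m - ‖a - α‖ := by
        field_simp; ring
      linarith
    rw [h1]
    have := real_inner_le_norm p (z - α)
    linarith [hR a ha, hR z hz]
  rw [penalized_diag] at h
  unfold penalized at h
  have h1 := key p₁ a α hp₁ ha
  have h2 := key p₂ b β hp₂ hb
  have h3 := hB (α - β)
  have h4 := abs_le.1 (hu a ha)
  have h5 := abs_le.1 (hv b hb)
  have h6 := abs_le.1 (hu z hz)
  have h7 := abs_le.1 (hv z hz)
  have h8 : m / 4 * ‖a - α‖ ^ 2 + m / 4 * ‖b - β‖ ^ 2 ≤ 4 * M + 4 * R + 2 / m := by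
    have : 2 / m = 1 / m + 1 / m := by ring
    linarith
  have fin : ∀ r : ℝ, 0 ≤ r → m / 4 * r ^ 2 ≤ 4 * M + 4 * R + 2 / m →
      r ≤ 1 + 4 * (4 * M + 4 * R + 2 / m) / m := by
    intro r hr h
    have h9 : r ^ 2 ≤ 4 * (4 * M + 4 * R + 2 / m) / m := by
      rw [le_div_iff₀ hm]; linarith
    nlinarith [sq_nonneg (r - 1)]
  have h10 : 0 ≤ m / 4 * ‖a - α‖ ^ 2 := by positivity
  have h11 : 0 ≤ m / 4 * ‖b - β‖ ^ 2 := by positivity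
  exact ⟨fin _ (norm_nonneg _) (by linarith), fin _ (norm_nonneg _) (by linarith)⟩

/-- The regularizations stay below the penalty whenever the doubled functional does. -/
theorem regularization_le_penalty (hBs : ∀ x y, ⟪B x, y⟫ = ⟪x, B y⟫) {k l : ℝ} (hm : 0 < m)
    (hk : 0 < k) (hl : l * (m + k) = m * k) (hBk : 2 * ‖B‖ ≤ k) {h₁ h₂ : F → ℝ}
    (H₁ : ∀ x y, ∃ a ∈ Q, h₁ x ≤ u a - l / 2 * ‖a - y‖ ^ 2 + k / 2 * ‖x - y‖ ^ 2)
    (H₂ : ∀ x y, ∃ a ∈ Q, h₂ x ≤ v a - l / 2 * ‖a - y‖ ^ 2 + k / 2 * ‖x - y‖ ^ 2)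
    {p₁ p₂ : F} {c : ℝ} (hc : ∀ a ∈ Q, ∀ b ∈ Q, ∀ α β, penalized u v B m p₁ p₂ a b α β ≤ c)
    (α β : F) :
    h₁ α + h₂ β ≤ c + 1 / 2 * ⟪B (α - β), α - β⟫ + ⟪p₁, α⟫ + ⟪p₂, β⟫ := by
  set G₁ := B (α - β) + p₁ with hG₁
  set G₂ := -B (α - β) + p₂ with hG₂
  obtain ⟨a, ha, h1⟩ := H₁ α (α - (1 / k) • G₁)
  obtain ⟨b, hb, h2⟩ := H₂ β (β - (1 / k) • G₂)
  obtain ⟨x₁, hx₁⟩ := exists_parallel_sum_eq (by positivity) hl a (α - (1 / k) • G₁)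
  obtain ⟨x₂, hx₂⟩ := exists_parallel_sum_eq (by positivity) hl b (β - (1 / k) • G₂)
  have h3 := hc a ha b hb x₁ x₂
  unfold penalized at h3
  have key : ∀ x α G : F, k / 2 * ‖x - (α - (1 / k) • G)‖ ^ 2 - k / 2 * ‖α - (α - (1 / k) • G)‖ ^ 2
      = k / 2 * ‖x - α‖ ^ 2 + ⟪G, x - α⟫ := by
    intro x α G
    have e1 : x - (α - (1 / k) • G) = (x - α) + (1 / k) • G := by abel
    rw [e1, sub_sub_cancel, norm_add_sq_real, inner_smul_right, real_inner_comm]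
    field_simp
    ring
  have k1 := key x₁ α G₁
  have k2 := key x₂ β G₂
  have e2 : x₁ - x₂ = (α - β) + ((x₁ - α) - (x₂ - β)) := by abel
  have h4 : 1 / 2 * ⟪B (x₁ - x₂), x₁ - x₂⟫ = 1 / 2 * ⟪B (α - β), α - β⟫
      + ⟪B (α - β), (x₁ - α) - (x₂ - β)⟫
      + 1 / 2 * ⟪B ((x₁ - α) - (x₂ - β)), (x₁ - α) - (x₂ - β)⟫ := by
    rw [e2, map_add, inner_add_left, inner_add_right, inner_add_right,
      hBs ((x₁ - α) - (x₂ - β)) (α - β), real_inner_comm (B (α - β)) ((x₁ - α) - (x₂ - β))]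
    ring
  have h5 : 1 / 2 * ⟪B ((x₁ - α) - (x₂ - β)), (x₁ - α) - (x₂ - β)⟫
      ≤ k / 2 * ‖x₁ - α‖ ^ 2 + k / 2 * ‖x₂ - β‖ ^ 2 := by
    have i1 : ⟪B ((x₁ - α) - (x₂ - β)), (x₁ - α) - (x₂ - β)⟫ ≤
        ‖B‖ * ‖(x₁ - α) - (x₂ - β)‖ ^ 2 := by
      refine (real_inner_le_norm _ _).trans ?_
      rw [pow_two, ← mul_assoc]
      gcongr
      exact B.le_opNorm _
    have i2 : ‖(x₁ - α) - (x₂ - β)‖ ^ 2 ≤ 2 * (‖x₁ - α‖ ^ 2 + ‖x₂ - β‖ ^ 2) := by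
      have i3 := norm_sub_le (x₁ - α) (x₂ - β)
      have i4 : ‖(x₁ - α) - (x₂ - β)‖ ^ 2 ≤ (‖x₁ - α‖ + ‖x₂ - β‖) ^ 2 := by gcongr
      nlinarith [sq_nonneg (‖x₁ - α‖ - ‖x₂ - β‖)]
    have i5 : ‖B‖ * ‖(x₁ - α) - (x₂ - β)‖ ^ 2 ≤ (k / 2) * (2 * (‖x₁ - α‖ ^ 2 + ‖x₂ - β‖ ^ 2)) := by
      gcongr
      linarith
    linarith
  have h6 : ⟪G₁, x₁ - α⟫ = ⟪B (α - β), x₁ - α⟫ + (⟪p₁, x₁⟫ - ⟪p₁, α⟫) := by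
    rw [hG₁, inner_add_left, inner_sub_right p₁]
  have h7 : ⟪G₂, x₂ - β⟫ = -⟪B (α - β), x₂ - β⟫ + (⟪p₂, x₂⟫ - ⟪p₂, β⟫) := by
    rw [hG₂, inner_add_left, inner_sub_right p₂, inner_neg_left]
  have h8 := inner_sub_right (𝕜 := ℝ) (B (α - β)) (x₁ - α) (x₂ - β)
  linarith

variable [FiniteDimensional ℝ F]

theorem exists_penalized_max (hQ : IsCompact Q) (hQn : Q.Nonempty)
    (huc : ContinuousOn u Q) (hvc : ContinuousOn v Q)
    (hB : ∀ x, 0 ≤ ⟪B x, x⟫) (hm : 0 < m)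
    (hR : ∀ a ∈ Q, ‖a‖ ≤ R) (hu : ∀ a ∈ Q, |u a| ≤ M) (hv : ∀ a ∈ Q, |v a| ≤ M)
    {p₁ p₂ : F} (hp₁ : ‖p₁‖ ≤ 1) (hp₂ : ‖p₂‖ ≤ 1) :
    ∃ a ∈ Q, ∃ b ∈ Q, ∃ α β, ∀ a' ∈ Q, ∀ b' ∈ Q, ∀ α' β',
      penalized u v B m p₁ p₂ a' b' α' β' ≤ penalized u v B m p₁ p₂ a b α β := by
  set R₁ := 1 + 4 * (4 * M + 4 * R + 2 / m) / m with hR₁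
  obtain ⟨z, hz⟩ := hQn
  have hR0 : 0 ≤ R := (norm_nonneg z).trans (hR z hz)
  have hM0 : 0 ≤ M := (abs_nonneg _).trans (hu z hz)
  have hR10 : 0 ≤ R₁ := by positivity
  set S : Set (F × F × F × F) :=
    Q ×ˢ Q ×ˢ Metric.closedBall (0 : F) (R + R₁) ×ˢ Metric.closedBall (0 : F) (R + R₁) with hS
  have hScomp : IsCompact S :=
    hQ.prod (hQ.prod ((isCompact_closedBall _ _).prod (isCompact_closedBall _ _)))
  have hzS : (z, z, z, z) ∈ S := by
    simp only [hS, Set.mem_prod, mem_closedBall_zero_iff]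
    have := hR z hz
    exact ⟨hz, hz, by linarith, by linarith⟩
  have hcont : ContinuousOn
      (fun w : F × F × F × F => penalized u v B m p₁ p₂ w.1 w.2.1 w.2.2.1 w.2.2.2) S := by
    unfold penalized
    have h1 : ContinuousOn (fun w : F × F × F × F => u w.1) S :=
      huc.comp continuousOn_fst fun w hw => hw.1
    have h2 : ContinuousOn (fun w : F × F × F × F => v w.2.1) S :=
      hvc.comp (by fun_prop) fun w hw => hw.2.1
    exact (((((h1.add h2).sub (by fun_prop)).sub (by fun_prop)).sub (by fun_prop)).sub
      (by fun_prop)).sub (by fun_prop)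
  obtain ⟨⟨a, b, α, β⟩, hw, hmax⟩ := hScomp.exists_isMaxOn ⟨_, hzS⟩ hcont
  refine ⟨a, hw.1, b, hw.2.1, α, β, fun a' ha' b' hb' α' β' => ?_⟩
  have h0 := hmax hzS
  simp only [Set.mem_ofPred_eq] at h0
  by_cases hle : penalized u v B m p₁ p₂ z z z z ≤ penalized u v B m p₁ p₂ a' b' α' β'
  · obtain ⟨h1, h2⟩ := penalized_bound hB hm hR hu hv hp₁ hp₂ ha' hb' hz hle
    refine hmax (show (a', b', α', β') ∈ S from ⟨ha', hb', ?_, ?_⟩)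
    · rw [mem_closedBall_zero_iff]
      have : α' = a' - (a' - α') := by abel
      rw [this]
      exact (norm_sub_le _ _).trans (add_le_add (hR _ ha') h1)
    · rw [mem_closedBall_zero_iff]
      have : β' = b' - (b' - β') := by abel
      rw [this]
      exact (norm_sub_le _ _).trans (add_le_add (hR _ hb') h2)
  · exact (not_le.1 hle).le.trans h0

end Sums

section Jensen

variable {F : Type*} [NormedAddCommGroup F] [InnerProductSpace ℝ F] [FiniteDimensional ℝ F]

open MeasureTheory in
/-- A set whose image under a Lipschitz self-map contains a ball contains a differentiability
point of any given Lipschitz map. -/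
theorem exists_differentiableAt_of_ball_subset_image {E E' : Type*} [NormedAddCommGroup E]
    [NormedSpace ℝ E] [FiniteDimensional ℝ E] [NormedAddCommGroup E'] [NormedSpace ℝ E']
    [FiniteDimensional ℝ E'] {Γ : E → E} {C C' : NNReal}
    (hΓ : LipschitzWith C Γ) {G : E → E'} (hG : LipschitzWith C' G) {S : Set E} {r : ℝ}
    (hr : 0 < r) (hS : Metric.ball 0 r ⊆ Γ '' S) : ∃ x ∈ S, DifferentiableAt ℝ G x := by
  let _ : MeasurableSpace E := borel E
  have : BorelSpace E := ⟨rfl⟩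
  by_contra! hcon
  have h0 : μH[Module.finrank ℝ E] S = 0 :=
    measure_mono_null (fun x hx => hcon x hx)
      (ae_iff.1 (hG.ae_differentiableAt (μ := μH[Module.finrank ℝ E])))
  have h1 := hΓ.hausdorffMeasure_image_le (d := Module.finrank ℝ E) (by positivity) S
  rw [h0, mul_zero] at h1
  have h2 : 0 < μH[(Module.finrank ℝ E : ℝ)] (Metric.ball (0 : E) r) :=
    Metric.measure_ball_pos _ _ hr
  exact absurd ((measure_mono hS).trans h1) (not_le.2 h2)

/-- Second order necessary condition at a maximum of `h₁ α + h₂ β - ½ ⟪B (α - β), α - β⟫`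
perturbed by a linear function. -/
theorem hessian_le_of_max {B : F →L[ℝ] F} (hBs : ∀ x y, ⟪B x, y⟫ = ⟪x, B y⟫)
    {h₁ h₂ : F → ℝ} {g₁ g₂ : F → F} (hg₁ : ∀ x, HasGradientAt h₁ (g₁ x) x)
    (hg₂ : ∀ x, HasGradientAt h₂ (g₂ x) x) {α β p₁ p₂ : F} {A₁ A₂ : F →L[ℝ] F} {c : ℝ}
    (hA₁ : HasFDerivAt g₁ A₁ α) (hA₂ : HasFDerivAt g₂ A₂ β)
    (hle : ∀ α β, h₁ α + h₂ β ≤ c + 1 / 2 * ⟪B (α - β), α - β⟫ + ⟪p₁, α⟫ + ⟪p₂, β⟫)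
    (heq : h₁ α + h₂ β = c + 1 / 2 * ⟪B (α - β), α - β⟫ + ⟪p₁, α⟫ + ⟪p₂, β⟫)
    (hg₁α : g₁ α = B (α - β) + p₁) (hg₂β : g₂ β = -B (α - β) + p₂) (e e' : F) :
    ⟪A₁ e, e⟫ + ⟪A₂ e', e'⟫ ≤ ⟪B (e - e'), e - e'⟫ := by
  have aux : ∀ ε > 0, ⟪A₁ e, e⟫ + ⟪A₂ e', e'⟫ ≤ ⟪B (e - e'), e - e'⟫
      + ε * (2 * ‖e‖ ^ 2 + 2 * ‖e'‖ ^ 2) := by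
    intro ε hε
    have t1 : Filter.Tendsto (fun t : ℝ => t • e) (nhds 0) (nhds 0) := by
      have : Continuous fun t : ℝ => t • e := by fun_prop
      simpa using this.tendsto 0
    have t2 : Filter.Tendsto (fun t : ℝ => t • e') (nhds 0) (nhds 0) := by
      have : Continuous fun t : ℝ => t • e' := by fun_prop
      simpa using this.tendsto 0
    have e1 := t1.eventually (taylor_two_of_hasFDerivAt_gradient hg₁ hA₁ hε)
    have e2 := t2.eventually (taylor_two_of_hasFDerivAt_gradient hg₂ hA₂ hε)
    have e3 : ∀ᶠ t : ℝ in nhdsWithin 0 (Set.Ioi 0), 0 < t := self_mem_nhdsWithin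
    obtain ⟨t, ⟨i1, i2⟩, ht⟩ :=
      (((e1.and e2).filter_mono nhdsWithin_le_nhds).and e3).exists
    have i3 := hle (α + t • e) (β + t • e')
    have d : (α + t • e) - (β + t • e') = (α - β) + t • (e - e') := by rw [smul_sub]; abel
    rw [d, map_add, inner_add_left, inner_add_right, inner_add_right, map_smul, inner_smul_left,
      inner_smul_left, inner_smul_right, inner_smul_right, inner_add_right, inner_add_right,
      inner_smul_right, inner_smul_right, hBs (e - e') (α - β),
      real_inner_comm (B (α - β)) (e - e')] at i3
    rw [hg₁α, inner_smul_right, inner_add_left, map_smul, inner_smul_left, inner_smul_right,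
      norm_smul, mul_pow] at i1
    rw [hg₂β, inner_smul_right, inner_add_left, inner_neg_left, map_smul, inner_smul_left,
      inner_smul_right, norm_smul, mul_pow] at i2
    simp only [conj_trivial, Real.norm_eq_abs, sq_abs] at i1 i2 i3
    have d3 : ⟪B (α - β), e - e'⟫ = ⟪B (α - β), e⟫ - ⟪B (α - β), e'⟫ := inner_sub_right _ _ _
    rw [d3] at i3
    have j1 := (abs_le.1 i1).1
    have j2 := (abs_le.1 i2).1
    have j3 : t ^ 2 * (⟪A₁ e, e⟫ + ⟪A₂ e', e'⟫) ≤ t ^ 2 * (⟪B (e - e'), e - e'⟫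
      + ε * (2 * ‖e‖ ^ 2 + 2 * ‖e'‖ ^ 2)) := by nlinarith
    exact le_of_mul_le_mul_left j3 (by positivity)
  refine le_of_forall_pos_le_add fun δ hδ => ?_
  have hpos : 0 < 2 * ‖e‖ ^ 2 + 2 * ‖e'‖ ^ 2 + 1 := by positivity
  refine (aux (δ / (2 * ‖e‖ ^ 2 + 2 * ‖e'‖ ^ 2 + 1)) (by positivity)).trans ?_
  have : δ / (2 * ‖e‖ ^ 2 + 2 * ‖e'‖ ^ 2 + 1) * (2 * ‖e‖ ^ 2 + 2 * ‖e'‖ ^ 2) ≤ δ := by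
    rw [div_mul_eq_mul_div, div_le_iff₀ hpos]
    nlinarith
  linarith

theorem hasGradientAt_half_quadratic {B : F →L[ℝ] F} (hBs : ∀ x y, ⟪B x, y⟫ = ⟪x, B y⟫)
    (p w x : F) :
    HasGradientAt (fun x => 1 / 2 * ⟪B (x - w), x - w⟫ + ⟪p, x⟫) (B (x - w) + p) x := by
  rw [hasGradientAt_iff_hasFDerivAt]
  have h1 : HasFDerivAt (fun x : F => x - w) (ContinuousLinearMap.id ℝ F) x :=
    (hasFDerivAt_id x).sub_const w
  have h2 : HasFDerivAt (fun x : F => B (x - w)) (B.comp (ContinuousLinearMap.id ℝ F)) x :=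
    B.hasFDerivAt.comp x h1
  have h3 := ((h2.inner ℝ h1).const_mul (1 / 2)).add ((hasFDerivAt_const p x).inner ℝ (hasFDerivAt_id x))
  refine h3.congr_fderiv ?_
  ext v
  simp [hBs v, real_inner_comm]
  rw [real_inner_comm]
  ring_nf
  rw [real_inner_comm, inner_sub_right]

/-- Theorem on sums, with strict touching from above at nearby points. -/
theorem exists_doubled_jets {Q : Set F} (hQ : IsCompact Q) (hQn : Q.Nonempty) {u v : F → ℝ}
    (huc : ContinuousOn u Q) (hvc : ContinuousOn v Q) {B : F →L[ℝ] F}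
    (hBs : ∀ x y, ⟪B x, y⟫ = ⟪x, B y⟫) (hB : ∀ x, 0 ≤ ⟪B x, x⟫) {m ρ : ℝ} (hm : 0 < m)
    (hρ : 0 < ρ) :
    ∃ a ∈ Q, ∃ b ∈ Q, ∃ (α β p₁ p₂ : F) (A₁ A₂ : F →L[ℝ] F), ‖p₁‖ ≤ ρ ∧ ‖p₂‖ ≤ ρ ∧
      (∀ z ∈ Q, u z + v z ≤ u a + v b - m / 2 * ‖a - α‖ ^ 2 - m / 2 * ‖b - β‖ ^ 2
        - 1 / 2 * ⟪B (α - β), α - β⟫ + ρ) ∧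
      (∀ ε > 0, ∀ᶠ z in nhds a, z ∈ Q → u z ≤ u a + ⟪B (α - β) + p₁, z - a⟫
        + 1 / 2 * ⟪A₁ (z - a), z - a⟫ + ε * ‖z - a‖ ^ 2) ∧
      (∀ ε > 0, ∀ᶠ z in nhds b, z ∈ Q → v z ≤ v b + ⟪-B (α - β) + p₂, z - b⟫
        + 1 / 2 * ⟪A₂ (z - b), z - b⟫ + ε * ‖z - b‖ ^ 2) ∧
      ∀ e e', ⟪A₁ e, e⟫ + ⟪A₂ e', e'⟫ ≤ ⟪B (e - e'), e - e'⟫ := by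
  obtain ⟨Mu, hMu⟩ := hQ.exists_bound_of_continuousOn huc
  obtain ⟨Mv, hMv⟩ := hQ.exists_bound_of_continuousOn hvc
  obtain ⟨R, hR⟩ := hQ.isBounded.exists_norm_le
  obtain ⟨z₀, hz₀⟩ := hQn
  set M := max Mu Mv
  have hu : ∀ a ∈ Q, |u a| ≤ M := fun a ha => (hMu a ha).trans (le_max_left _ _)
  have hv : ∀ a ∈ Q, |v a| ≤ M := fun a ha => (hMv a ha).trans (le_max_right _ _)
  have hR0 : 0 ≤ R := (norm_nonneg z₀).trans (hR z₀ hz₀)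
  have hM0 : 0 ≤ M := (abs_nonneg _).trans (hu z₀ hz₀)
  set R₁ := 1 + 4 * (4 * M + 4 * R + 2 / m) / m with hR₁
  have hR10 : 0 < R₁ := by positivity
  set k := 2 * ‖B‖ + 1 with hk
  have hk0 : 0 < k := by positivity
  set l := m * k / (m + k) with hl'
  have hl : l * (m + k) = m * k := by rw [hl']; field_simp
  obtain ⟨h₁, g₁, L₁, hg₁, hL₁, hu₁, H₁⟩ := exists_regularization hQ ⟨z₀, hz₀⟩ huc hm hk0 hl
  obtain ⟨h₂, g₂, L₂, hg₂, hL₂, hv₂, H₂⟩ := exists_regularization hQ ⟨z₀, hz₀⟩ hvc hm hk0 hl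
  set r := min (min 1 ρ) (ρ / (2 * (R₁ + 2 * R))) with hr
  have hr0 : 0 < r := by positivity
  let G : F × F → F × F := fun ξ => (g₁ ξ.1, g₂ ξ.2)
  let D : F × F →L[ℝ] F × F :=
    let d := B.comp (ContinuousLinearMap.fst ℝ F F - ContinuousLinearMap.snd ℝ F F)
    d.prod (-d)
  have hD : ∀ ξ, D ξ = (B (ξ.1 - ξ.2), -B (ξ.1 - ξ.2)) := fun ξ => rfl
  have hG : LipschitzWith (max (L₁ * 1) (L₂ * 1)) G :=
    (hL₁.comp LipschitzWith.prod_fst).prodMk (hL₂.comp LipschitzWith.prod_snd)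
  have hΓ := hG.sub D.lipschitz
  let S : Set (F × F) := {ξ | ∃ p : F × F, ‖p‖ < r ∧ G ξ - D ξ = p ∧ ∃ a ∈ Q, ∃ b ∈ Q,
    ∀ a' ∈ Q, ∀ b' ∈ Q, ∀ α' β', penalized u v B m p.1 p.2 a' b' α' β' ≤
      penalized u v B m p.1 p.2 a b ξ.1 ξ.2}
  have touch : ∀ (p₁ p₂ a b α β : F), a ∈ Q → b ∈ Q →
      (∀ a' ∈ Q, ∀ b' ∈ Q, ∀ α' β', penalized u v B m p₁ p₂ a' b' α' β' ≤
        penalized u v B m p₁ p₂ a b α β) →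
      (∀ α' β', h₁ α' + h₂ β' ≤ penalized u v B m p₁ p₂ a b α β
        + 1 / 2 * ⟪B (α' - β'), α' - β'⟫ + ⟪p₁, α'⟫ + ⟪p₂, β'⟫) ∧
      h₁ α + h₂ β = penalized u v B m p₁ p₂ a b α β
        + 1 / 2 * ⟪B (α - β), α - β⟫ + ⟪p₁, α⟫ + ⟪p₂, β⟫ ∧
      u a = h₁ α + m / 2 * ‖a - α‖ ^ 2 ∧ v b = h₂ β + m / 2 * ‖b - β‖ ^ 2 := by
    intro p₁ p₂ a b α β ha hb hmax
    have i1 := regularization_le_penalty hBs hm hk0 hl (by linarith) H₁ H₂ hmax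
    have i2 := i1 α β
    have i3 := hu₁ a ha α
    have i4 := hv₂ b hb β
    refine ⟨i1, ?_, ?_, ?_⟩
    · unfold penalized at i2 ⊢; linarith
    all_goals unfold penalized at i2; linarith
  have hS : Metric.ball 0 r ⊆ (fun ξ => G ξ - D ξ) '' S := by
    intro p hp
    rw [mem_ball_zero_iff] at hp
    have hp1 : ‖p.1‖ < r := (norm_fst_le p).trans_lt hp
    have hp2 : ‖p.2‖ < r := (norm_snd_le p).trans_lt hp
    have hr1 : r ≤ 1 := (min_le_left _ _).trans (min_le_left _ _)
    obtain ⟨a, ha, b, hb, α, β, hmax⟩ := exists_penalized_max hQ ⟨z₀, hz₀⟩ huc hvc hB hm hR hu hv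
      (hp1.le.trans hr1) (hp2.le.trans hr1)
    have hGD : G (α, β) - D (α, β) = p := by
      obtain ⟨i1, i2, -, -⟩ := touch p.1 p.2 a b α β ha hb hmax
      have j1 : g₁ α = B (α - β) + p.1 := by
        have q := (hg₁ α).hasFDerivAt.sub (hasGradientAt_half_quadratic hBs p.1 β α).hasFDerivAt
        have hz := IsLocalMax.hasFDerivAt_eq_zero
          (f := fun x => h₁ x - (1 / 2 * ⟪B (x - β), x - β⟫ + ⟪p.1, x⟫))
          (Filter.Eventually.of_forall fun x => by have := i1 x β; linarith) q
        rw [sub_eq_zero] at hz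
        exact (InnerProductSpace.toDual ℝ F).injective hz
      have j2 : g₂ β = B (β - α) + p.2 := by
        have q := (hg₂ β).hasFDerivAt.sub (hasGradientAt_half_quadratic hBs p.2 α β).hasFDerivAt
        have sw : ∀ x, ⟪B (x - α), x - α⟫ = ⟪B (α - x), α - x⟫ := by
          intro x; rw [← neg_sub α x, map_neg, inner_neg_neg]
        have hz := IsLocalMax.hasFDerivAt_eq_zero
          (f := fun x => h₂ x - (1 / 2 * ⟪B (x - α), x - α⟫ + ⟪p.2, x⟫))
          (Filter.Eventually.of_forall fun x => by
            have := i1 α x; simp only [sw]; linarith) q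
        rw [sub_eq_zero] at hz
        exact (InnerProductSpace.toDual ℝ F).injective hz
      rw [hD]
      refine Prod.ext ?_ ?_
      · simp [G, j1]
      · simp only [G, Prod.snd_sub, j2]
        rw [← neg_sub α β, map_neg]; abel
    exact ⟨(α, β), ⟨p, hp, hGD, a, ha, b, hb, hmax⟩, hGD⟩
  obtain ⟨⟨α, β⟩, ⟨⟨p₁, p₂⟩, hp, hGD, a, ha, b, hb, hmax⟩, hdiff⟩ :=
    exists_differentiableAt_of_ball_subset_image hΓ hG hr0 hS
  simp only at hmax
  have hp1 : ‖p₁‖ < r := (norm_fst_le (p₁, p₂)).trans_lt hp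
  have hp2 : ‖p₂‖ < r := (norm_snd_le (p₁, p₂)).trans_lt hp
  have hr1 : r ≤ 1 := (min_le_left _ _).trans (min_le_left _ _)
  have hrρ : r ≤ ρ := (min_le_left _ _).trans (min_le_right _ _)
  obtain ⟨i1, i2, i3, i4⟩ := touch p₁ p₂ a b α β ha hb hmax
  have j1 : g₁ α = B (α - β) + p₁ := by
    have := congrArg Prod.fst hGD
    simp only [hD, G, Prod.fst_sub] at this
    rw [← this]; abel
  have j2 : g₂ β = -B (α - β) + p₂ := by
    have := congrArg Prod.snd hGD
    simp only [hD, G, Prod.snd_sub] at this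
    rw [← this]; abel
  have dg₁ : DifferentiableAt ℝ g₁ α := by
    have : DifferentiableAt ℝ (fun x : F => (G (x, β)).1) α :=
      (hdiff.comp α (f := fun x : F => (x, β)) (by fun_prop)).fst
    exact this
  have dg₂ : DifferentiableAt ℝ g₂ β := by
    have : DifferentiableAt ℝ (fun x : F => (G (α, x)).2) β :=
      (hdiff.comp β (f := fun x : F => (α, x)) (by fun_prop)).snd
    exact this
  have touch_near : ∀ {w h : F → ℝ} {g : F → F} {a α : F}, (∀ x, HasGradientAt h (g x) x) →
      DifferentiableAt ℝ g α → (∀ a ∈ Q, ∀ x, w a ≤ h x + m / 2 * ‖a - x‖ ^ 2) →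
      w a = h α + m / 2 * ‖a - α‖ ^ 2 → ∀ ε > 0, ∀ᶠ z in nhds a, z ∈ Q →
      w z ≤ w a + ⟪g α, z - a⟫ + 1 / 2 * ⟪fderiv ℝ g α (z - a), z - a⟫ + ε * ‖z - a‖ ^ 2 := by
    intro w h g a α hg dg hw hwa ε hε
    have t : Filter.Tendsto (fun z => z - a) (nhds a) (nhds 0) := by
      have : Continuous fun z : F => z - a := by fun_prop
      simpa using this.tendsto a
    filter_upwards [t.eventually (taylor_two_of_hasFDerivAt_gradient hg dg.hasFDerivAt hε)]
      with z hz hzQ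
    have k1 := hw z hzQ (α + (z - a))
    have k2 : z - (α + (z - a)) = a - α := by abel
    rw [k2] at k1
    have k3 := (abs_le.1 hz).2
    linarith
  refine ⟨a, ha, b, hb, α, β, p₁, p₂, fderiv ℝ g₁ α, fderiv ℝ g₂ β, hp1.le.trans hrρ,
    hp2.le.trans hrρ, ?_, ?_, ?_, ?_⟩
  · intro z hz
    have k1 := hmax z hz z hz z z
    obtain ⟨b1, b2⟩ := penalized_bound hB hm hR hu hv (hp1.le.trans hr1) (hp2.le.trans hr1) ha hb hz k1
    rw [penalized_diag] at k1
    unfold penalized at k1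
    have key : ∀ p a α : F, ‖p‖ < r → a ∈ Q → ‖a - α‖ ≤ R₁ → ⟪p, z⟫ - ⟪p, α⟫ ≤ ρ / 2 := by
      intro p a α hp ha hα
      have h2 : ‖z - α‖ ≤ R₁ + 2 * R := by
        have : z - α = z - a + (a - α) := by abel
        rw [this]
        have e1 := norm_add_le (z - a) (a - α)
        have e2 := norm_sub_le z a
        linarith [hR a ha, hR z hz]
      rw [← inner_sub_right]
      refine (real_inner_le_norm _ _).trans ?_
      calc ‖p‖ * ‖z - α‖ ≤ (ρ / (2 * (R₁ + 2 * R))) * (R₁ + 2 * R) := by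
            gcongr
            exact hp.le.trans (min_le_right _ _)
        _ = ρ / 2 := by field_simp
    have := key p₁ a α hp1 ha b1
    have := key p₂ b β hp2 hb b2
    linarith
  · rw [← j1]; exact touch_near hg₁ dg₁ hu₁ i3
  · rw [← j2]; exact touch_near hg₂ dg₂ hv₂ i4
  · exact hessian_le_of_max hBs hg₁ hg₂ dg₁.hasFDerivAt dg₂.hasFDerivAt i1 i2 j1 j2

end Jensen

section DoubledMaximum

variable {F : Type*} [NormedAddCommGroup F] [InnerProductSpace ℝ F]

theorem norm_sq_sub_expand (z a z₀ : F) :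
    ‖z - z₀‖ ^ 2 = ‖a - z₀‖ ^ 2 + 2 * ⟪a - z₀, z - a⟫ + ‖z - a‖ ^ 2 := by
  have : z - z₀ = (a - z₀) + (z - a) := by abel
  rw [this, norm_add_sq_real]

variable [FiniteDimensional ℝ F]

/-- At a maximum point `z₀` of `u + v`, the theorem on sums produces quadratic majorants of `u`
and `v` at nearby points, with vanishing penalization. -/
theorem exists_doubled_jets_near_max {Q : Set F} (hQ : IsCompact Q) {z₀ : F} (hz₀ : z₀ ∈ Q)
    {u v : F → ℝ} (huc : ContinuousOn u Q) (hvc : ContinuousOn v Q)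
    (hmax : ∀ z ∈ Q, u z + v z ≤ u z₀ + v z₀) {s : ℝ} (hs : 0 < s) (hs1 : s ≤ 1) :
    ∃ k₁ : ℝ, 1 ≤ k₁ ∧ ∀ (B : F →L[ℝ] F) (m : ℝ), (∀ x y, ⟪B x, y⟫ = ⟪x, B y⟫) →
      (∀ x, k₁ * ‖x‖ ^ 2 ≤ ⟪B x, x⟫) → k₁ ≤ m →
      ∃ a ∈ Q, ∃ b ∈ Q, ∃ (α β e₁ e₂ : F) (M₁ M₂ : F →L[ℝ] F),
        ‖a - z₀‖ ≤ s ∧ ‖b - z₀‖ ≤ s ∧ m * ‖a - α‖ ^ 2 ≤ s ∧ m * ‖b - β‖ ^ 2 ≤ s ∧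
        ⟪B (α - β), α - β⟫ ≤ s ∧ ‖e₁‖ ≤ s ∧ ‖e₂‖ ≤ s ∧
        (∀ᶠ z in nhds a, z ∈ Q → u z ≤ u a + ⟪B (α - β) + e₁, z - a⟫
          + 1 / 2 * ⟪M₁ (z - a), z - a⟫) ∧
        (∀ᶠ z in nhds b, z ∈ Q → v z ≤ v b + ⟪-B (α - β) + e₂, z - b⟫
          + 1 / 2 * ⟪M₂ (z - b), z - b⟫) ∧
        ∀ e e', ⟪M₁ e, e⟫ + ⟪M₂ e', e'⟫ ≤ ⟪B (e - e'), e - e'⟫ + s * (‖e‖ ^ 2 + ‖e'‖ ^ 2) := by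
  obtain ⟨M, hM⟩ := hQ.exists_bound_of_continuousOn hvc
  have hM0 : 0 ≤ M := (norm_nonneg _).trans (hM z₀ hz₀)
  set ρ := s ^ 3 / 32 with hρ
  have hρ0 : 0 < ρ := by positivity
  have hs3 : s ^ 3 ≤ s := by nlinarith [mul_pos hs hs]
  have hv := hQ.uniformContinuousOn_of_continuous hvc
  obtain ⟨δ, hδ, hvδ⟩ := Metric.uniformContinuousOn_iff.1 hv ρ hρ0
  set d := min δ (s / 2) with hd
  have hd0 : 0 < d := by positivity
  set γ := s / 4 with hγ
  refine ⟨max 1 (18 * (2 * M + 1) / d ^ 2 + 1), le_max_left _ _, ?_⟩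
  intro B m hBs hB hm
  have hk1 := le_max_left 1 (18 * (2 * M + 1) / d ^ 2 + 1)
  have hk2 := le_max_right 1 (18 * (2 * M + 1) / d ^ 2 + 1)
  set k₁ := max 1 (18 * (2 * M + 1) / d ^ 2 + 1)
  have hk0 : 0 < k₁ := by linarith
  have hkd : 18 * (2 * M + 1) < k₁ * d ^ 2 := by
    rw [← div_lt_iff₀ (by positivity)]; linarith
  have hB0 : ∀ x, 0 ≤ ⟪B x, x⟫ := fun x => (by positivity : 0 ≤ k₁ * ‖x‖ ^ 2).trans (hB x)
  have huc' : ContinuousOn (fun z => u z - γ * ‖z - z₀‖ ^ 2) Q := huc.sub (by fun_prop)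
  obtain ⟨a, ha, b, hb, α, β, p₁, p₂, A₁, A₂, hp₁, hp₂, hmx, hju, hjv, hA⟩ :=
    exists_doubled_jets hQ ⟨z₀, hz₀⟩ huc' hvc hBs hB0 (by linarith : 0 < m) hρ0
  have i1 := hmx z₀ hz₀
  simp only [sub_self, norm_zero] at i1
  have i2 := hmax a ha
  have va := abs_le.1 (hM a ha)
  have vb := abs_le.1 (hM b hb)
  have hρ1 : ρ ≤ 1 := by rw [hρ]; linarith
  have hγ0 : 0 < γ := by positivity
  have n0 : 0 ≤ γ * ‖a - z₀‖ ^ 2 := by positivity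
  have n1 : k₁ * ‖a - α‖ ^ 2 ≤ m * ‖a - α‖ ^ 2 := by gcongr
  have n2 : k₁ * ‖b - β‖ ^ 2 ≤ m * ‖b - β‖ ^ 2 := by gcongr
  have n3 := hB (α - β)
  have n4 : 0 ≤ k₁ * ‖a - α‖ ^ 2 := by positivity
  have n5 : 0 ≤ k₁ * ‖b - β‖ ^ 2 := by positivity
  have n6 : 0 ≤ k₁ * ‖α - β‖ ^ 2 := by positivity
  have small : ∀ x : ℝ, 0 ≤ x → k₁ * x ^ 2 ≤ 2 * (2 * M + 1) → x < d / 3 := by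
    intro x hx h
    by_contra! hc
    have : k₁ * (d / 3) ^ 2 ≤ k₁ * x ^ 2 := by gcongr
    nlinarith
  have hab : ‖a - b‖ < d := by
    have e1 := small ‖a - α‖ (norm_nonneg _) (by linarith)
    have e2 := small ‖b - β‖ (norm_nonneg _) (by linarith)
    have e3 := small ‖α - β‖ (norm_nonneg _) (by linarith)
    have : a - b = (a - α) + (α - β) - (b - β) := by abel
    rw [this]
    have := norm_sub_le ((a - α) + (α - β)) (b - β)
    have := norm_add_le (a - α) (α - β)
    linarith
  have hvab : |v a - v b| < ρ := by
    have := hvδ a ha b hb (by rw [dist_eq_norm]; exact hab.trans_le (min_le_left _ _))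
    rwa [Real.dist_eq] at this
  have hvab' := (abs_lt.1 hvab).1
  have haz : ‖a - z₀‖ ≤ s / 2 := by
    refine le_of_sq_le_sq ?_ (by positivity)
    have : γ * ‖a - z₀‖ ^ 2 ≤ γ * (s / 2) ^ 2 := by
      have : γ * (s / 2) ^ 2 = 2 * ρ := by rw [hγ, hρ]; ring
      linarith
    exact le_of_mul_le_mul_left this hγ0
  refine ⟨a, ha, b, hb, α, β, p₁ + (2 * γ) • (a - z₀), p₂,
    A₁ + (4 * γ) • ContinuousLinearMap.id ℝ F, A₂ + (2 * γ) • ContinuousLinearMap.id ℝ F,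
    by linarith, ?_, by linarith, by linarith, by linarith, ?_, by linarith, ?_, ?_, ?_⟩
  · have : b - z₀ = (a - z₀) - (a - b) := by abel
    rw [this]
    have := norm_sub_le (a - z₀) (a - b)
    have := min_le_right δ (s / 2)
    linarith
  · refine (norm_add_le _ _).trans ?_
    rw [norm_smul, Real.norm_of_nonneg (by positivity)]
    nlinarith
  · filter_upwards [hju γ hγ0] with z hz hzQ
    have h := hz hzQ
    have h2 := norm_sq_sub_expand z a z₀
    simp only [inner_add_left, add_apply, smul_apply,
      ContinuousLinearMap.id_apply, inner_smul_left, conj_trivial, real_inner_self_eq_norm_sq]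
      at h ⊢
    rw [h2] at h
    linarith
  · filter_upwards [hjv γ hγ0] with z hz hzQ
    have h := hz hzQ
    simp only [inner_add_left, add_apply, smul_apply,
      ContinuousLinearMap.id_apply, inner_smul_left, conj_trivial, real_inner_self_eq_norm_sq]
      at h ⊢
    linarith
  · intro e e'
    have h := hA e e'
    simp only [inner_add_left, add_apply, smul_apply,
      ContinuousLinearMap.id_apply, inner_smul_left, conj_trivial, real_inner_self_eq_norm_sq]
    have : 0 ≤ s * ‖e'‖ ^ 2 := by positivity
    rw [hγ]
    linarith

end DoubledMaximum

section TestFunctions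

variable {n : ℕ}

/-- Every `C³` function coincides near a given point with a test function. -/
theorem exists_isTestFunction_eventuallyEq {g : ℝ × Eucl n → ℝ} (hg : ContDiff ℝ 3 g)
    (z₀ : ℝ × Eucl n) :
    ∃ ψ : ℝ → Eucl n → ℝ, IsTestFunction ψ ∧ ∀ᶠ z in nhds z₀, ψ z.1 z.2 = g z := by
  let χ : ContDiffBump z₀ := ⟨1, 2, one_pos, one_lt_two⟩
  have hc : ContDiff ℝ 3 (fun z => χ z * g z) := χ.contDiff.mul hg
  have hs : HasCompactSupport (fun z => χ z * g z) := χ.hasCompactSupport.mul_right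
  refine ⟨fun t x => χ (t, x) * g (t, x), ⟨hc, fun i _ hi => ?_⟩, ?_⟩
  · have h1 : Continuous (iteratedFDeriv ℝ i fun z => χ z * g z) :=
      hc.continuous_iteratedFDeriv (by exact_mod_cast hi)
    exact (hs.iteratedFDeriv i).exists_bound_of_continuous h1
  · filter_upwards [χ.eventuallyEq_one] with z hz
    simp only [Prod.mk.eta, hz, Pi.one_apply, one_mul]

theorem timeDeriv_congr {ψ φ : ℝ → Eucl n → ℝ} {t : ℝ} {x : Eucl n}
    (h : ∀ᶠ z in nhds (t, x), ψ z.1 z.2 = φ z.1 z.2) : timeDeriv ψ t x = timeDeriv φ t x :=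
  Filter.EventuallyEq.deriv_eq
    ((by fun_prop : Continuous fun s : ℝ => (s, x)).tendsto t |>.eventually h)

theorem spaceGrad_congr {ψ φ : ℝ → Eucl n → ℝ} {t : ℝ} {x : Eucl n}
    (h : ∀ᶠ z in nhds (t, x), ψ z.1 z.2 = φ z.1 z.2) : spaceGrad ψ t x = spaceGrad φ t x := by
  have : (fun y => ψ t y) =ᶠ[nhds x] fun y => φ t y :=
    (by fun_prop : Continuous fun y : Eucl n => (t, y)).tendsto x |>.eventually h
  exact this.gradient_eq

theorem spaceHess_congr {ψ φ : ℝ → Eucl n → ℝ} {t : ℝ} {x : Eucl n}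
    (h : ∀ᶠ z in nhds (t, x), ψ z.1 z.2 = φ z.1 z.2) : spaceHess ψ t x = spaceHess φ t x := by
  have h1 : (fun y => ψ t y) =ᶠ[nhds x] fun y => φ t y :=
    (by fun_prop : Continuous fun y : Eucl n => (t, y)).tendsto x |>.eventually h
  ext i j
  simp only [spaceHess, Matrix.of_apply]
  have h2 : (fun y => fderiv ℝ (fun y' => ψ t y') y (EuclideanSpace.single j (1 : ℝ)))
      =ᶠ[nhds x] fun y => fderiv ℝ (fun y' => φ t y') y (EuclideanSpace.single j (1 : ℝ)) :=
    (h1.fderiv (𝕜 := ℝ)).mono fun y hy => congrArg (fun L => L (EuclideanSpace.single j (1 : ℝ))) hy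
  rw [h2.fderiv_eq]

/-- The symmetric matrix of the quadratic form `e ↦ ⟪N e, e⟫`. -/
def quadMatrix (N : Eucl n →L[ℝ] Eucl n) : Matrix (Fin n) (Fin n) ℝ :=
  Matrix.of fun i j => 1 / 2 * (⟪N (EuclideanSpace.single i (1 : ℝ)), EuclideanSpace.single j (1 : ℝ)⟫
    + ⟪N (EuclideanSpace.single j (1 : ℝ)), EuclideanSpace.single i (1 : ℝ)⟫)

theorem quadMatrix_neg (N : Eucl n →L[ℝ] Eucl n) : quadMatrix (-N) = -quadMatrix N := by
  ext i j
  simp only [quadMatrix, Matrix.of_apply, Matrix.neg_apply, neg_apply, inner_neg_left]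
  ring

/-- The `k`-th column of a matrix. -/
def column {d : ℕ} (σ : Matrix (Fin n) (Fin d) ℝ) (k : Fin d) : Eucl n :=
  WithLp.toLp 2 fun i => σ i k

theorem column_eq_sum {d : ℕ} (σ : Matrix (Fin n) (Fin d) ℝ) (k : Fin d) :
    column σ k = ∑ i, σ i k • EuclideanSpace.single i (1 : ℝ) := by
  ext j
  simp [column, Finset.sum_apply, Pi.single_apply]

theorem trace_mul_quadMatrix {d : ℕ} (σ : Matrix (Fin n) (Fin d) ℝ) (N : Eucl n →L[ℝ] Eucl n) :
    Matrix.trace (σ * σᵀ * quadMatrix N) = ∑ k, ⟪N (column σ k), column σ k⟫ := by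
  have h1 : ∀ k, ⟪N (column σ k), column σ k⟫ = ∑ i, ∑ j, σ i k * σ j k *
      ⟪N (EuclideanSpace.single i (1 : ℝ)), EuclideanSpace.single j (1 : ℝ)⟫ := by
    intro k
    rw [column_eq_sum, map_sum, sum_inner]
    refine Finset.sum_congr rfl fun i _ => ?_
    rw [inner_sum]
    refine Finset.sum_congr rfl fun j _ => ?_
    rw [map_smul, inner_smul_left, inner_smul_right, conj_trivial]
    ring
  simp only [h1]
  set c : Fin n → Fin n → ℝ :=
    fun i j => ⟪N (EuclideanSpace.single i (1 : ℝ)), EuclideanSpace.single j (1 : ℝ)⟫ with hc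
  have h2 : Matrix.trace (σ * σᵀ * quadMatrix N) =
      ∑ i, ∑ j, ∑ k, σ i k * σ j k * (1 / 2 * (c j i + c i j)) := by
    simp only [Matrix.trace, Matrix.diag_apply, Matrix.mul_apply, Matrix.transpose_apply,
      quadMatrix, Matrix.of_apply, Finset.sum_mul, hc]
  have h3 : ∑ i, ∑ j, ∑ k, σ i k * σ j k * c j i = ∑ i, ∑ j, ∑ k, σ i k * σ j k * c i j := by
    rw [Finset.sum_comm]
    refine Finset.sum_congr rfl fun i _ => Finset.sum_congr rfl fun j _ =>
      Finset.sum_congr rfl fun k _ => by ring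
  have h4 : ∑ k, ∑ i, ∑ j, σ i k * σ j k * c i j = ∑ i, ∑ j, ∑ k, σ i k * σ j k * c i j := by
    rw [Finset.sum_comm]
    exact Finset.sum_congr rfl fun i _ => Finset.sum_comm
  rw [h2, h4]
  have h5 : ∀ i j k, σ i k * σ j k * (1 / 2 * (c j i + c i j)) =
      1 / 2 * (σ i k * σ j k * c j i) + 1 / 2 * (σ i k * σ j k * c i j) := fun i j k => by ring
  simp only [h5, Finset.sum_add_distrib, ← Finset.mul_sum, h3]
  ring

theorem norm_sq_eq_sum_column {d : ℕ} (σ : Matrix (Fin n) (Fin d) ℝ) :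
    ‖σ‖ ^ 2 = ∑ k, ‖column σ k‖ ^ 2 := by
  rw [Matrix.frobenius_norm_def, ← Real.sqrt_eq_rpow, Real.sq_sqrt (by positivity),
    Finset.sum_comm]
  refine Finset.sum_congr rfl fun k _ => ?_
  rw [EuclideanSpace.norm_sq_eq]
  simp [column]

theorem column_sub {d : ℕ} (σ σ' : Matrix (Fin n) (Fin d) ℝ) (k : Fin d) :
    column (σ - σ') k = column σ k - column σ' k := rfl

section Perturbation

variable {φ : ℝ → Eucl n → ℝ} {t : ℝ} {x : Eucl n}

theorem timeDeriv_add_quadratic (hφ : ContDiff ℝ 3 fun z : ℝ × Eucl n => φ z.1 z.2)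
    {q : ℝ → Eucl n → ℝ} {c m : ℝ} (hq : ∀ s, q s x = c * (s - t) + m * (s - t) ^ 2) (C : ℝ) :
    timeDeriv (fun s y => φ s y + C + q s y) t x = timeDeriv φ t x + c := by
  have h1 : HasDerivAt (fun s => φ s x) (timeDeriv φ t x) t := by
    have : ContDiff ℝ 3 fun s : ℝ => φ s x :=
      hφ.comp (contDiff_id.prodMk contDiff_const)
    exact (this.differentiable (by norm_num)).differentiableAt.hasDerivAt
  have h2 : HasDerivAt (fun s => c * (s - t) + m * (s - t) ^ 2) c t := by
    have h := (((hasDerivAt_id t).sub_const t).const_mul c).fun_add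
      ((((hasDerivAt_id t).sub_const t).pow 2).const_mul m)
    simpa using h
  simp only [timeDeriv, hq]
  exact ((h1.add_const C).add h2).deriv

theorem hasFDerivAt_quadratic (p : Eucl n) (N : Eucl n →L[ℝ] Eucl n) (x y : Eucl n) :
    HasFDerivAt (fun y => ⟪p, y - x⟫ + 1 / 2 * ⟪N (y - x), y - x⟫)
      (innerSL ℝ p + (1 / 2 : ℝ) • (innerSL ℝ (N (y - x)) + (innerSL ℝ (y - x)).comp N)) y := by
  have h1 : HasFDerivAt (fun y : Eucl n => y - x) (ContinuousLinearMap.id ℝ _) y :=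
    (hasFDerivAt_id y).sub_const x
  have h2 := N.hasFDerivAt.comp y h1
  have h3 := ((hasFDerivAt_const p y).inner ℝ h1).add ((h2.inner ℝ h1).const_mul (1 / 2))
  refine h3.congr_fderiv ?_
  ext v
  simp [real_inner_comm, inner_sub_left, inner_sub_right]
  ring

theorem spaceGrad_add_quadratic (hφ : ContDiff ℝ 3 fun z : ℝ × Eucl n => φ z.1 z.2)
    {q : ℝ → Eucl n → ℝ} {p : Eucl n} {N : Eucl n →L[ℝ] Eucl n}
    (hq : ∀ y, q t y = ⟪p, y - x⟫ + 1 / 2 * ⟪N (y - x), y - x⟫) (C : ℝ) :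
    spaceGrad (fun s y => φ s y + C + q s y) t x = spaceGrad φ t x + p := by
  have h1 : HasGradientAt (fun y => φ t y) (spaceGrad φ t x) x := by
    have : ContDiff ℝ 3 fun y : Eucl n => φ t y :=
      hφ.comp (contDiff_const.prodMk contDiff_id)
    exact (this.differentiable (by norm_num)).differentiableAt.hasGradientAt
  have h3 := (h1.hasFDerivAt.add_const C).add (hasFDerivAt_quadratic p N x x)
  simp only [spaceGrad, hq]
  refine HasGradientAt.gradient ?_
  rw [hasGradientAt_iff_hasFDerivAt]
  refine h3.congr_fderiv ?_
  ext v
  simp [spaceGrad]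

theorem spaceHess_add_quadratic (hφ : ContDiff ℝ 3 fun z : ℝ × Eucl n => φ z.1 z.2)
    {q : ℝ → Eucl n → ℝ} {p : Eucl n} {N : Eucl n →L[ℝ] Eucl n}
    (hq : ∀ y, q t y = ⟪p, y - x⟫ + 1 / 2 * ⟪N (y - x), y - x⟫) (C : ℝ) :
    spaceHess (fun s y => φ s y + C + q s y) t x = spaceHess φ t x + quadMatrix N := by
  have h0 : ContDiff ℝ 3 fun y : Eucl n => φ t y :=
    hφ.comp (contDiff_const.prodMk contDiff_id)
  have h1 : ∀ y, HasFDerivAt (fun y => φ t y) (fderiv ℝ (fun y => φ t y) y) y := fun y =>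
    (h0.differentiable (by norm_num)).differentiableAt.hasFDerivAt
  have h2 : ContDiff ℝ 2 (fderiv ℝ fun y => φ t y) := h0.fderiv_right (by norm_num)
  ext i j
  simp only [spaceHess, Matrix.of_apply, Matrix.add_apply, quadMatrix, hq]
  set ei : Eucl n := EuclideanSpace.single i 1
  set ej : Eucl n := EuclideanSpace.single j 1
  have h3 : (fun y => fderiv ℝ
      (fun y' => φ t y' + C + (⟪p, y' - x⟫ + 1 / 2 * ⟪N (y' - x), y' - x⟫)) y ej) =
      fun y => fderiv ℝ (fun y' => φ t y') y ej + (⟪p, ej⟫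
        + 1 / 2 * (⟪N (y - x), ej⟫ + ⟪y - x, N ej⟫)) := by
    funext y
    rw [(((h1 y).add_const C).fun_add (hasFDerivAt_quadratic p N x y)).fderiv]
    simp [inner_sub_left]
    ring
  rw [h3]
  have h4 : HasFDerivAt (fun y => fderiv ℝ (fun y' => φ t y') y ej)
      (fderiv ℝ (fun y => fderiv ℝ (fun y' => φ t y') y ej) x) x :=
    (((h2.clm_apply contDiff_const).differentiable (by norm_num)).differentiableAt).hasFDerivAt
  have k1 : HasFDerivAt (fun y : Eucl n => y - x) (ContinuousLinearMap.id ℝ _) x :=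
    (hasFDerivAt_id x).sub_const x
  have k2 := N.hasFDerivAt.comp x k1
  have h5 := (((k2.inner ℝ (hasFDerivAt_const ej x)).add
    (k1.inner ℝ (hasFDerivAt_const (N ej) x))).const_mul (1 / 2)).const_add ⟪p, ej⟫
  have h6 := (h4.add h5).fderiv
  refine (congrArg (fun L => L ei) h6).trans ?_
  simp [real_inner_comm]
  ring

end Perturbation

end TestFunctions

section TestPair

variable {n : ℕ}

/-- Space-time with its Euclidean structure. -/
abbrev SpaceTime (n : ℕ) := WithLp 2 (ℝ × Eucl n)

/-- The identity from `ℝ × ℝⁿ` to Euclidean space-time. -/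
def toSpaceTime (n : ℕ) : (ℝ × Eucl n) ≃L[ℝ] SpaceTime n :=
  (WithLp.prodContinuousLinearEquiv 2 ℝ ℝ (Eucl n)).symm

theorem inner_eq_fst_snd (y z : SpaceTime n) : ⟪y, z⟫ = y.fst * z.fst + ⟪y.snd, z.snd⟫ := by
  rw [WithLp.prod_inner_apply]
  simp [mul_comm]

theorem norm_sq_eq_fst_snd (z : SpaceTime n) : ‖z‖ ^ 2 = z.fst ^ 2 + ‖z.snd‖ ^ 2 := by
  rw [← real_inner_self_eq_norm_sq, inner_eq_fst_snd, real_inner_self_eq_norm_sq]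
  ring

theorem abs_fst_le (z : SpaceTime n) : |z.fst| ≤ ‖z‖ := by
  refine abs_le_of_sq_le_sq ?_ (norm_nonneg _)
  rw [norm_sq_eq_fst_snd]
  nlinarith [sq_nonneg ‖z.snd‖]

theorem norm_snd_le_norm (z : SpaceTime n) : ‖z.snd‖ ≤ ‖z‖ := by
  refine le_of_sq_le_sq ?_ (norm_nonneg _)
  rw [norm_sq_eq_fst_snd]
  nlinarith [sq_nonneg z.fst]

/-- The inclusion of space into space-time. -/
def spaceInclusion (n : ℕ) : Eucl n →L[ℝ] SpaceTime n :=
  (toSpaceTime n).toContinuousLinearMap.comp (ContinuousLinearMap.inr ℝ ℝ (Eucl n))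

/-- The projection of space-time onto space. -/
def spaceProjection (n : ℕ) : SpaceTime n →L[ℝ] Eucl n :=
  (ContinuousLinearMap.snd ℝ ℝ (Eucl n)).comp (toSpaceTime n).symm.toContinuousLinearMap

/-- The spatial block of an operator on space-time. -/
def spatialBlock (M : SpaceTime n →L[ℝ] SpaceTime n) : Eucl n →L[ℝ] Eucl n :=
  (spaceProjection n).comp (M.comp (spaceInclusion n))

theorem inner_spatialBlock (M : SpaceTime n →L[ℝ] SpaceTime n) (e e' : Eucl n) :
    ⟪spatialBlock M e, e'⟫ = ⟪M (spaceInclusion n e), spaceInclusion n e'⟫ := by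
  rw [inner_eq_fst_snd]
  simp [spatialBlock, spaceProjection, spaceInclusion, toSpaceTime]

theorem spatialBlock_neg (M : SpaceTime n →L[ℝ] SpaceTime n) :
    spatialBlock (-M) = -spatialBlock M := by
  ext e : 1
  simp [spatialBlock]

theorem norm_spaceInclusion (e : Eucl n) : ‖spaceInclusion n e‖ ^ 2 = ‖e‖ ^ 2 := by
  rw [norm_sq_eq_fst_snd]
  simp [spaceInclusion, toSpaceTime]

/-- The operator acting by `k` on the time component and by `k₁` on the space component. -/
def blockScaling (n : ℕ) (k k₁ : ℝ) : SpaceTime n →L[ℝ] SpaceTime n :=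
  (toSpaceTime n).toContinuousLinearMap.comp
    (((k • ContinuousLinearMap.fst ℝ ℝ (Eucl n)).prod (k₁ • ContinuousLinearMap.snd ℝ ℝ (Eucl n))).comp
      (toSpaceTime n).symm.toContinuousLinearMap)

@[simp] theorem blockScaling_fst (k k₁ : ℝ) (z : SpaceTime n) :
    (blockScaling n k k₁ z).fst = k * z.fst := rfl

@[simp] theorem blockScaling_snd (k k₁ : ℝ) (z : SpaceTime n) :
    (blockScaling n k k₁ z).snd = k₁ • z.snd := rfl

/-- A `C³` function plus a quadratic polynomial on space-time, renormalized to vanish at `a`,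
coincides near `a` with a test function whose derivatives at `a` are the expected ones. -/
theorem exists_isTestFunction_quadratic {φ : ℝ → Eucl n → ℝ}
    (hφ : ContDiff ℝ 3 fun z : ℝ × Eucl n => φ z.1 z.2) (t : ℝ) (x : Eucl n) (g : SpaceTime n)
    (M : SpaceTime n →L[ℝ] SpaceTime n) :
    ∃ ψ : ℝ → Eucl n → ℝ, IsTestFunction ψ ∧ ψ t x = 0 ∧
      timeDeriv ψ t x = timeDeriv φ t x + g.fst ∧
      spaceGrad ψ t x = spaceGrad φ t x + g.snd ∧
      spaceHess ψ t x = spaceHess φ t x + quadMatrix (spatialBlock M) ∧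
      ∀ᶠ z in nhds (t, x), ψ z.1 z.2 = φ z.1 z.2 + -φ t x +
        (⟪g, toSpaceTime n (z - (t, x))⟫
          + 1 / 2 * ⟪M (toSpaceTime n (z - (t, x))), toSpaceTime n (z - (t, x))⟫) := by
  let q : ℝ → Eucl n → ℝ := fun s y => ⟪g, toSpaceTime n ((s, y) - (t, x))⟫
    + 1 / 2 * ⟪M (toSpaceTime n ((s, y) - (t, x))), toSpaceTime n ((s, y) - (t, x))⟫
  have hc : ContDiff ℝ 3 fun z : ℝ × Eucl n => φ z.1 z.2 + -φ t x + q z.1 z.2 := by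
    have h1 : ContDiff ℝ 3 fun z : ℝ × Eucl n => toSpaceTime n ((z.1, z.2) - (t, x)) :=
      (toSpaceTime n).contDiff.comp (by fun_prop)
    exact (hφ.add contDiff_const).add ((contDiff_const.inner ℝ h1).add
      (contDiff_const.mul ((M.contDiff.comp h1).inner ℝ h1)))
  obtain ⟨ψ, hψ, he⟩ := exists_isTestFunction_eventuallyEq hc (t, x)
  have hqt : ∀ s, q s x = g.fst * (s - t)
      + (1 / 2 * ⟪M (toSpaceTime n (1, 0)), toSpaceTime n (1, 0)⟫) * (s - t) ^ 2 := by
    intro s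
    have h1 : ((s, x) - (t, x) : ℝ × Eucl n) = (s - t) • (1, 0) := by simp
    simp only [q]
    rw [h1, map_smul, map_smul, inner_smul_left, inner_smul_right, inner_smul_right,
      inner_eq_fst_snd g]
    simp [toSpaceTime]
    ring
  have hqx : ∀ y, q t y = ⟪g.snd, y - x⟫ + 1 / 2 * ⟪spatialBlock M (y - x), y - x⟫ := by
    intro y
    have h1 : toSpaceTime n ((t, y) - (t, x)) = spaceInclusion n (y - x) := by
      simp [spaceInclusion]
    simp only [q]
    rw [h1, inner_spatialBlock, inner_eq_fst_snd g]
    simp [spaceInclusion, toSpaceTime]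
  refine ⟨ψ, hψ, ?_, ?_, ?_, ?_, he⟩
  · have h0 : ψ t x = φ t x + -φ t x + q t x := he.self_of_nhds
    rw [h0, hqt]
    simp
  · rw [timeDeriv_congr (φ := fun s y => φ s y + -φ t x + q s y) he]
    exact timeDeriv_add_quadratic hφ hqt _
  · rw [spaceGrad_congr (φ := fun s y => φ s y + -φ t x + q s y) he]
    exact spaceGrad_add_quadratic hφ hqx _
  · rw [spaceHess_congr (φ := fun s y => φ s y + -φ t x + q s y) he]
    exact spaceHess_add_quadratic hφ hqx _

end TestPair

section DoubledTest

variable {n : ℕ}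

theorem mul_norm_add_three_sq_le {E : Type*} [NormedAddCommGroup E] {k s : ℝ} (hk : 0 ≤ k)
    {x y z : E} (hx : k * ‖x‖ ^ 2 ≤ s) (hy : k * ‖y‖ ^ 2 ≤ s) (hz : k * ‖z‖ ^ 2 ≤ s) :
    k * ‖x + y - z‖ ^ 2 ≤ 9 * s := by
  have h : ‖x + y - z‖ ≤ ‖x‖ + ‖y‖ + ‖z‖ :=
    (norm_sub_le _ _).trans (by gcongr; exact norm_add_le _ _)
  have h1 : ‖x + y - z‖ ^ 2 ≤ 3 * (‖x‖ ^ 2 + ‖y‖ ^ 2 + ‖z‖ ^ 2) := by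
    have : ‖x + y - z‖ ^ 2 ≤ (‖x‖ + ‖y‖ + ‖z‖) ^ 2 := by gcongr
    nlinarith [sq_nonneg (‖x‖ - ‖y‖), sq_nonneg (‖y‖ - ‖z‖), sq_nonneg (‖x‖ - ‖z‖)]
  have := mul_le_mul_of_nonneg_left h1 hk
  linarith

/-- If `u₁ - u₂ - φ` has a local maximum at `(t₀, x₀)`, then there are nearby points at which
`u₁` and `u₂` are touched from above and below by test functions whose derivatives are related
by the doubling of variables. The time penalization is chosen after the space penalization. -/
theorem exists_test_pair {T : ℝ} {u₁ u₂ φ : ℝ → Eucl n → ℝ}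
    (hu₁ : ContinuousOn (fun z : ℝ × Eucl n => u₁ z.1 z.2) (Set.Icc 0 T ×ˢ Set.univ))
    (hu₂ : ContinuousOn (fun z : ℝ × Eucl n => u₂ z.1 z.2) (Set.Icc 0 T ×ˢ Set.univ))
    (hφ : ContDiff ℝ 3 fun z : ℝ × Eucl n => φ z.1 z.2) {t₀ : ℝ} (ht₀ : t₀ ∈ Set.Ico 0 T)
    {x₀ : Eucl n}
    (hmax : IsLocalMaxOn (fun z : ℝ × Eucl n => (u₁ z.1 z.2 - u₂ z.1 z.2) - φ z.1 z.2)
      (Set.Icc 0 T ×ˢ Set.univ) (t₀, x₀)) {s : ℝ} (hs : 0 < s) (hs1 : s ≤ 1) :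
    ∃ k₁ : ℝ, 1 ≤ k₁ ∧ ∀ δ > 0, ∃ t ∈ Set.Ico 0 T, ∃ t' ∈ Set.Ico 0 T, ∃ x x' χ p₁ p₂ : Eucl n,
      ∃ c c₁ c₂ : ℝ, ∃ X₁ X₂ : Matrix (Fin n) (Fin n) ℝ, ∃ ψ₁ ψ₂ : ℝ → Eucl n → ℝ,
        (|t - t₀| ≤ s ∧ ‖x - x₀‖ ≤ s ∧ |t' - t₀| ≤ s ∧ ‖x' - x₀‖ ≤ s ∧ |t - t'| ≤ δ ∧
          k₁ * ‖x - x'‖ ^ 2 ≤ 9 * s ∧ k₁ * ‖χ‖ ^ 2 ≤ s ∧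
          |c₁| ≤ s ∧ |c₂| ≤ s ∧ ‖p₁‖ ≤ s ∧ ‖p₂‖ ≤ s) ∧
        (IsTestFunction ψ₁ ∧ IsLocalMaxOn (fun z : ℝ × Eucl n => u₁ z.1 z.2 - ψ₁ z.1 z.2)
            (Set.Icc 0 T ×ˢ Set.univ) (t, x) ∧ ψ₁ t x = 0 ∧
          timeDeriv ψ₁ t x = timeDeriv φ t x + (c + c₁) ∧
          spaceGrad ψ₁ t x = spaceGrad φ t x + (k₁ • χ + p₁) ∧
          spaceHess ψ₁ t x = spaceHess φ t x + X₁) ∧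
        (IsTestFunction ψ₂ ∧ IsLocalMinOn (fun z : ℝ × Eucl n => u₂ z.1 z.2 - ψ₂ z.1 z.2)
            (Set.Icc 0 T ×ˢ Set.univ) (t', x') ∧ ψ₂ t' x' = 0 ∧
          timeDeriv ψ₂ t' x' = c + c₂ ∧ spaceGrad ψ₂ t' x' = k₁ • χ + p₂ ∧
          spaceHess ψ₂ t' x' = -X₂) ∧
        ∀ (d : ℕ) (σ₁ σ₂ : Matrix (Fin n) (Fin d) ℝ),
          Matrix.trace (σ₁ * σ₁ᵀ * X₁) + Matrix.trace (σ₂ * σ₂ᵀ * X₂)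
            ≤ k₁ * ‖σ₁ - σ₂‖ ^ 2 + s * (‖σ₁‖ ^ 2 + ‖σ₂‖ ^ 2) := by
  set D : Set (ℝ × Eucl n) := Set.Icc 0 T ×ˢ Set.univ with hD
  let e := toSpaceTime n
  set z₀ : SpaceTime n := e (t₀, x₀) with hz₀
  have hnear : ∀ᶠ z in nhds z₀, e.symm z ∈ D →
      (u₁ z.fst z.snd - u₂ z.fst z.snd) - φ z.fst z.snd ≤ (u₁ t₀ x₀ - u₂ t₀ x₀) - φ t₀ x₀ := by
    have h1 := eventually_nhdsWithin_iff.1 hmax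
    have h2 : Filter.Tendsto e.symm (nhds z₀) (nhds (t₀, x₀)) := by
      have := e.symm.continuous.tendsto z₀
      rwa [hz₀, e.symm_apply_apply] at this
    exact h2.eventually h1
  obtain ⟨r, hr, hball⟩ := Metric.nhds_basis_closedBall.eventually_iff.1 hnear
  set Q : Set (SpaceTime n) := Metric.closedBall z₀ r ∩ e.symm ⁻¹' D with hQ
  have hDc : IsClosed D := isClosed_Icc.prod isClosed_univ
  have hQc : IsCompact Q :=
    (isCompact_closedBall z₀ r).inter_right (hDc.preimage e.symm.continuous)
  have ht₀' : t₀ ∈ Set.Icc 0 T := ⟨ht₀.1, ht₀.2.le⟩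
  have hz₀D : e.symm z₀ ∈ D := by
    rw [hz₀, e.symm_apply_apply]; exact ⟨ht₀', Set.mem_univ _⟩
  have hz₀Q : z₀ ∈ Q := ⟨Metric.mem_closedBall_self hr.le, hz₀D⟩
  have hmaps : Set.MapsTo e.symm Q D := fun z hz => hz.2
  have hu : ContinuousOn (fun z : SpaceTime n => u₁ z.fst z.snd - φ z.fst z.snd) Q :=
    (hu₁.sub hφ.continuous.continuousOn).comp e.symm.continuous.continuousOn hmaps
  have hv : ContinuousOn (fun z : SpaceTime n => -u₂ z.fst z.snd) Q :=
    hu₂.neg.comp e.symm.continuous.continuousOn hmaps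
  set s' := min s (min ((T - t₀) / 2) (r / 2)) with hs'
  have hTt : 0 < T - t₀ := sub_pos.2 ht₀.2
  have hs'0 : 0 < s' := by positivity
  have hs's : s' ≤ s := min_le_left _ _
  have hs'T : s' ≤ (T - t₀) / 2 := (min_le_right _ _).trans (min_le_left _ _)
  have hs'r : s' ≤ r / 2 := (min_le_right _ _).trans (min_le_right _ _)
  obtain ⟨k₁, hk₁, H⟩ := exists_doubled_jets_near_max hQc hz₀Q hu hv
    (fun z hz => by
      have h1 := hball hz.1 hz.2
      have h2 : z₀.fst = t₀ := rfl
      have h3 : z₀.snd = x₀ := rfl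
      rw [h2, h3]; linarith) hs'0 (hs's.trans hs1)
  refine ⟨k₁, hk₁, fun δ hδ => ?_⟩
  set k := max k₁ (9 / δ ^ 2) with hk
  have hk0 : 0 < k := lt_of_lt_of_le (by linarith) (le_max_left _ _)
  have hkk₁ : k₁ ≤ k := le_max_left _ _
  have hkδ : 9 ≤ k * δ ^ 2 := by
    rw [← div_le_iff₀ (by positivity)]; exact le_max_right _ _
  obtain ⟨a, ha, b, hb, α, β, e₁, e₂, M₁, M₂, haz, hbz, haα, hbβ, hαβ, he₁, he₂, hja, hjb, hM⟩ :=
    H (blockScaling n k k₁) k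
      (fun x y => by
        rw [inner_eq_fst_snd, inner_eq_fst_snd]
        simp only [blockScaling_fst, blockScaling_snd, inner_smul_left, inner_smul_right,
          conj_trivial]
        ring)
      (fun x => by
        rw [inner_eq_fst_snd, norm_sq_eq_fst_snd]
        simp only [blockScaling_fst, blockScaling_snd, inner_smul_left, conj_trivial,
          real_inner_self_eq_norm_sq]
        nlinarith [sq_nonneg x.fst]) hkk₁
  have hαβ' : k * (α - β).fst ^ 2 + k₁ * ‖(α - β).snd‖ ^ 2 ≤ s' := by
    rw [inner_eq_fst_snd] at hαβ
    simp only [blockScaling_fst, blockScaling_snd, inner_smul_left, conj_trivial,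
      real_inner_self_eq_norm_sq] at hαβ
    linarith
  rw [norm_sq_eq_fst_snd] at haα hbβ
  have q1 : ∀ w : SpaceTime n, 0 ≤ k * w.fst ^ 2 := fun w => by positivity
  have q2 : ∀ w : SpaceTime n, 0 ≤ k₁ * ‖w.snd‖ ^ 2 := fun w => by positivity
  have q3 : ∀ w : SpaceTime n, k₁ * ‖w.snd‖ ^ 2 ≤ k * ‖w.snd‖ ^ 2 := fun w => by gcongr
  have hfst : |a.fst - b.fst| ≤ δ := by
    have h := mul_norm_add_three_sq_le hk0.le (x := (a - α).fst) (y := (α - β).fst)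
      (z := (b - β).fst) (s := s')
      (by rw [Real.norm_eq_abs, sq_abs]; linarith [q2 (a - α), q3 (a - α)])
      (by rw [Real.norm_eq_abs, sq_abs]; linarith [q2 (α - β)])
      (by rw [Real.norm_eq_abs, sq_abs]; linarith [q2 (b - β), q3 (b - β)])
    have h1 : (a - α).fst + (α - β).fst - (b - β).fst = a.fst - b.fst := by
      simp only [WithLp.sub_fst]; ring
    rw [h1, Real.norm_eq_abs] at h
    refine le_of_sq_le_sq (le_of_mul_le_mul_left ?_ hk0) hδ.le
    linarith
  have hsnd : k₁ * ‖a.snd - b.snd‖ ^ 2 ≤ 9 * s' := by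
    have h := mul_norm_add_three_sq_le (by linarith : 0 ≤ k₁) (x := (a - α).snd)
      (y := (α - β).snd) (z := (b - β).snd) (s := s')
      (by linarith [q1 (a - α), q3 (a - α)]) (by linarith [q1 (α - β)])
      (by linarith [q1 (b - β), q3 (b - β)])
    have h1 : (a - α).snd + (α - β).snd - (b - β).snd = a.snd - b.snd := by
      simp only [WithLp.sub_snd]; abel
    rwa [h1] at h
  have hfz : ∀ w : SpaceTime n, ‖w - z₀‖ ≤ s' → |w.fst - t₀| ≤ s' := fun w hw =>
    (abs_fst_le (w - z₀)).trans hw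
  have hsz : ∀ w : SpaceTime n, ‖w - z₀‖ ≤ s' → ‖w.snd - x₀‖ ≤ s' := fun w hw =>
    (norm_snd_le_norm (w - z₀)).trans hw
  have hIco : ∀ w ∈ Q, ‖w - z₀‖ ≤ s' → w.fst ∈ Set.Ico 0 T := fun w hw hwz =>
    ⟨hw.2.1.1, by have := (abs_le.1 (hfz w hwz)).2; linarith⟩
  have hlocQ : ∀ w : SpaceTime n, ‖w - z₀‖ ≤ s' → ∀ {P : SpaceTime n → Prop},
      (∀ᶠ z in nhds w, z ∈ Q → P z) → ∀ᶠ z in nhds (w.fst, w.snd), z ∈ D → P (e z) := by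
    intro w hwz P hP
    have h1 : ∀ᶠ z in nhds w, z ∈ Metric.closedBall z₀ r := by
      refine Filter.mem_of_superset (Metric.ball_mem_nhds w (half_pos hr)) fun z hz => ?_
      rw [mem_ball_iff_norm] at hz
      change z ∈ Metric.closedBall z₀ r
      rw [mem_closedBall_iff_norm]
      have : z - z₀ = (z - w) + (w - z₀) := by abel
      rw [this]
      exact (norm_add_le _ _).trans (by linarith)
    have h2 : Filter.Tendsto e (nhds (w.fst, w.snd)) (nhds w) := e.continuous.tendsto _
    filter_upwards [h2.eventually hP, h2.eventually h1] with z hz hz1 hzD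
    exact hz ⟨hz1, by simpa using hzD⟩
  obtain ⟨ψ₁, hψ₁, hψ₁0, hψ₁t, hψ₁x, hψ₁X, hψ₁e⟩ := exists_isTestFunction_quadratic hφ a.fst a.snd
    (blockScaling n k k₁ (α - β) + e₁) M₁
  obtain ⟨ψ₂, hψ₂, hψ₂0, hψ₂t, hψ₂x, hψ₂X, hψ₂e⟩ := exists_isTestFunction_quadratic
    (φ := fun _ _ => (0 : ℝ)) contDiff_const b.fst b.snd
    (blockScaling n k k₁ (α - β) - e₂) (-M₂)
  have z1 : timeDeriv (fun (_ : ℝ) (_ : Eucl n) => (0 : ℝ)) b.fst b.snd = 0 := by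
    simp [timeDeriv]
  have z2 : spaceGrad (fun (_ : ℝ) (_ : Eucl n) => (0 : ℝ)) b.fst b.snd = 0 := by
    simp [spaceGrad]
  have z3 : spaceHess (fun (_ : ℝ) (_ : Eucl n) => (0 : ℝ)) b.fst b.snd = 0 := by
    ext i j
    simp [spaceHess]
  have hex : ∀ (w : SpaceTime n) (z : ℝ × Eucl n), e (z - (w.fst, w.snd)) = e z - w := by
    intro w z
    rw [map_sub]; rfl
  refine ⟨a.fst, hIco a ha haz, b.fst, hIco b hb hbz, a.snd, b.snd, (α - β).snd, e₁.snd, -e₂.snd,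
    k * (α - β).fst, e₁.fst, -e₂.fst, quadMatrix (spatialBlock M₁), quadMatrix (spatialBlock M₂),
    ψ₁, ψ₂, ⟨(hfz a haz).trans hs's, (hsz a haz).trans hs's, (hfz b hbz).trans hs's,
      (hsz b hbz).trans hs's, hfst, by linarith, by linarith [q1 (α - β)],
      ((abs_fst_le e₁).trans he₁).trans hs's, ?_, ((norm_snd_le_norm e₁).trans he₁).trans hs's, ?_⟩,
    ⟨hψ₁, ?_, hψ₁0, ?_, ?_, hψ₁X⟩, ⟨hψ₂, ?_, hψ₂0, ?_, ?_, ?_⟩, ?_⟩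
  · rw [abs_neg]; exact ((abs_fst_le e₂).trans he₂).trans hs's
  · rw [norm_neg]; exact ((norm_snd_le_norm e₂).trans he₂).trans hs's
  · refine eventually_nhdsWithin_iff.2 ?_
    filter_upwards [hlocQ a haz hja, hψ₁e] with z hz hψz hzD
    have h1 := hz hzD
    change u₁ z.1 z.2 - ψ₁ z.1 z.2 ≤ u₁ a.fst a.snd - ψ₁ a.fst a.snd
    rw [hψz, hψ₁0, hex]
    have h2 : (e z).fst = z.1 := rfl
    have h3 : (e z).snd = z.2 := rfl
    rw [h2, h3] at h1
    linarith
  · rw [hψ₁t]; rfl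
  · rw [hψ₁x]; rfl
  · refine eventually_nhdsWithin_iff.2 ?_
    filter_upwards [hlocQ b hbz hjb, hψ₂e] with z hz hψz hzD
    have h1 := hz hzD
    change u₂ b.fst b.snd - ψ₂ b.fst b.snd ≤ u₂ z.1 z.2 - ψ₂ z.1 z.2
    rw [hψz, hψ₂0, hex]
    have h2 : (e z).fst = z.1 := rfl
    have h3 : (e z).snd = z.2 := rfl
    rw [h2, h3] at h1
    simp only [neg_apply, inner_neg_left, inner_add_left, inner_sub_left] at h1 ⊢
    linarith
  · rw [hψ₂t, z1, zero_add, WithLp.sub_fst, blockScaling_fst, sub_eq_add_neg]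
  · rw [hψ₂x, z2, zero_add, WithLp.sub_snd, blockScaling_snd, sub_eq_add_neg]
  · rw [hψ₂X, z3, zero_add, spatialBlock_neg, quadMatrix_neg]
  · intro d σ₁ σ₂
    rw [trace_mul_quadMatrix, trace_mul_quadMatrix, norm_sq_eq_sum_column,
      norm_sq_eq_sum_column σ₁, norm_sq_eq_sum_column σ₂, ← Finset.sum_add_distrib,
      ← Finset.sum_add_distrib, Finset.mul_sum, Finset.mul_sum, ← Finset.sum_add_distrib]
    refine Finset.sum_le_sum fun i _ => ?_
    have h := hM (spaceInclusion n (column σ₁ i)) (spaceInclusion n (column σ₂ i))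
    rw [← map_sub, inner_eq_fst_snd (blockScaling n k k₁ _), norm_spaceInclusion,
      norm_spaceInclusion, ← inner_spatialBlock, ← inner_spatialBlock, ← column_sub] at h
    have h1 : ∀ w : Eucl n, (spaceInclusion n w).fst = 0 := fun w => rfl
    have h2 : ∀ w : Eucl n, (spaceInclusion n w).snd = w := fun w => rfl
    simp only [blockScaling_snd, h1, h2, mul_zero, zero_add, inner_smul_left, conj_trivial,
      real_inner_self_eq_norm_sq] at h
    have : s' * (‖column σ₁ i‖ ^ 2 + ‖column σ₂ i‖ ^ 2)
      ≤ s * (‖column σ₁ i‖ ^ 2 + ‖column σ₂ i‖ ^ 2) := by gcongr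
    linarith

end DoubledTest

section Estimates

theorem rowMul_apply {n d : ℕ} (p : Eucl n) (M : Matrix (Fin n) (Fin d) ℝ) (j : Fin d) :
    rowMul p M j = ∑ i, p i * M i j := rfl

theorem rowMul_apply_eq_inner {n d : ℕ} (p : Eucl n) (M : Matrix (Fin n) (Fin d) ℝ) (j : Fin d) :
    rowMul p M j = ⟪column M j, p⟫ := by
  rw [rowMul_apply, PiLp.inner_apply]
  simp [column]

theorem rowMul_add {n d : ℕ} (p q : Eucl n) (M : Matrix (Fin n) (Fin d) ℝ) :
    rowMul (p + q) M = rowMul p M + rowMul q M := by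
  ext j
  simp only [PiLp.add_apply, rowMul_apply_eq_inner, inner_add_right]

theorem rowMul_sub {n d : ℕ} (p : Eucl n) (M M' : Matrix (Fin n) (Fin d) ℝ) :
    rowMul p (M - M') = rowMul p M - rowMul p M' := by
  ext j
  simp only [PiLp.sub_apply, rowMul_apply_eq_inner, column_sub, inner_sub_left]

theorem norm_rowMul_le {n d : ℕ} (p : Eucl n) (M : Matrix (Fin n) (Fin d) ℝ) :
    ‖rowMul p M‖ ≤ ‖p‖ * ‖M‖ := by
  refine le_of_sq_le_sq ?_ (by positivity)
  rw [mul_pow, norm_sq_eq_sum_column, EuclideanSpace.norm_sq_eq, Finset.mul_sum]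
  refine Finset.sum_le_sum fun j _ => ?_
  rw [rowMul_apply_eq_inner, ← mul_pow, mul_comm]
  exact pow_le_pow_left₀ (norm_nonneg _) (norm_inner_le_norm _ _) 2

theorem continuous_rowMul {n d : ℕ} :
    Continuous fun q : Eucl n × Matrix (Fin n) (Fin d) ℝ => rowMul q.1 q.2 := by
  unfold rowMul
  refine (PiLp.continuous_toLp 2 _).comp ?_
  fun_prop

section Penalized

variable {k₁ s C S r : ℝ} {n : ℕ} {χ p₁ p₂ : Eucl n}

theorem penalty_mul_increment_le (hk₁ : 1 ≤ k₁) (hs : 0 < s) (hs1 : s ≤ 1) (hC : 0 ≤ C)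
    (hr : k₁ * r ^ 2 ≤ 9 * s) (hχ : k₁ * ‖χ‖ ^ 2 ≤ s) :
    k₁ * ‖χ‖ * (C * r + s / k₁) ≤ (5 * C + 1) * s := by
  have hk0 : 0 < k₁ := by linarith
  have h1 : k₁ * ‖χ‖ * r ≤ 5 * s := by nlinarith [mul_nonneg hk0.le (sq_nonneg (‖χ‖ - r))]
  have h2 : ‖χ‖ ≤ 1 := by
    by_contra! h
    nlinarith
  have h3 : k₁ * ‖χ‖ * (C * r + s / k₁) = C * (k₁ * ‖χ‖ * r) + ‖χ‖ * s := by field_simp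
  rw [h3]
  have := mul_le_mul_of_nonneg_left h1 hC
  have := mul_le_mul_of_nonneg_right h2 hs.le
  linarith

theorem penalty_mul_increment_sq_le (hk₁ : 1 ≤ k₁) (hs : 0 < s) (hs1 : s ≤ 1)
    (hr : k₁ * r ^ 2 ≤ 9 * s) :
    k₁ * (C * r + s / k₁) ^ 2 ≤ (18 * C ^ 2 + 2) * s := by
  have hk0 : 0 < k₁ := by linarith
  have h1 : (C * r + s / k₁) ^ 2 ≤ 2 * (C ^ 2 * r ^ 2 + (s / k₁) ^ 2) := by
    nlinarith [sq_nonneg (C * r - s / k₁)]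
  have h2 : k₁ * (s / k₁) ^ 2 ≤ s := by
    have : k₁ * (s / k₁) ^ 2 = s * (s / k₁) := by field_simp
    rw [this]
    have : s / k₁ ≤ 1 := (div_le_one hk0).2 (hs1.trans hk₁)
    nlinarith
  have h3 := mul_le_mul_of_nonneg_left h1 hk0.le
  have h4 := mul_le_mul_of_nonneg_left hr (sq_nonneg C)
  linarith

theorem generator_sub_le (hk₁ : 1 ≤ k₁) (hs : 0 < s) (hs1 : s ≤ 1) (hC : 0 ≤ C)
    (hr : k₁ * r ^ 2 ≤ 9 * s) (hχ : k₁ * ‖χ‖ ^ 2 ≤ s) (hp₁ : ‖p₁‖ ≤ s) (hp₂ : ‖p₂‖ ≤ s)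
    {d : ℕ} {σ₁ σ₂ : Matrix (Fin n) (Fin d) ℝ} {b₁ b₂ : Eucl n} (hσ₁ : ‖σ₁‖ ≤ S) (hσ₂ : ‖σ₂‖ ≤ S)
    (hb₁ : ‖b₁‖ ≤ S) (hb₂ : ‖b₂‖ ≤ S) (hσ : ‖σ₁ - σ₂‖ ≤ C * r + s / k₁)
    (hb : ‖b₁ - b₂‖ ≤ C * r + s / k₁) {X₁ X₂ : Matrix (Fin n) (Fin n) ℝ}
    (hX : Matrix.trace (σ₁ * σ₁ᵀ * X₁) + Matrix.trace (σ₂ * σ₂ᵀ * X₂)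
      ≤ k₁ * ‖σ₁ - σ₂‖ ^ 2 + s * (‖σ₁‖ ^ 2 + ‖σ₂‖ ^ 2)) (p : Eucl n)
    (X : Matrix (Fin n) (Fin n) ℝ) :
    1 / 2 * Matrix.trace (σ₁ * σ₁ᵀ * (X + X₁)) + ⟪p + (k₁ • χ + p₁), b₁⟫
      ≤ 1 / 2 * Matrix.trace (σ₂ * σ₂ᵀ * -X₂) + ⟪k₁ • χ + p₂, b₂⟫
        + (1 / 2 * Matrix.trace (σ₁ * σ₁ᵀ * X) + ⟪p, b₁⟫)
        + (9 * C ^ 2 + 2 + S ^ 2 + 5 * C + 2 * S) * s := by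
  have hk0 : 0 < k₁ := by linarith
  have hS : 0 ≤ S := (norm_nonneg _).trans hσ₁
  have h1 := penalty_mul_increment_le hk₁ hs hs1 hC hr hχ
  have h2 := penalty_mul_increment_sq_le (C := C) hk₁ hs hs1 hr
  have h3 : k₁ * ‖σ₁ - σ₂‖ ^ 2 ≤ k₁ * (C * r + s / k₁) ^ 2 := by gcongr
  have h4 : s * (‖σ₁‖ ^ 2 + ‖σ₂‖ ^ 2) ≤ s * (S ^ 2 + S ^ 2) := by gcongr
  have h5 : ⟪k₁ • χ, b₁ - b₂⟫ ≤ k₁ * ‖χ‖ * (C * r + s / k₁) := by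
    refine (real_inner_le_norm _ _).trans ?_
    rw [norm_smul, Real.norm_of_nonneg hk0.le]
    gcongr
  have h6 : ⟪p₁, b₁⟫ ≤ s * S := (real_inner_le_norm _ _).trans (by gcongr)
  have h7 : -⟪p₂, b₂⟫ ≤ s * S := by
    have := (abs_le.1 ((abs_real_inner_le_norm p₂ b₂).trans
      (by gcongr : ‖p₂‖ * ‖b₂‖ ≤ s * S))).1
    linarith
  rw [inner_sub_right] at h5
  simp only [mul_add, mul_neg, Matrix.trace_add, Matrix.trace_neg, inner_add_left]
  linarith

theorem norm_rowMul_sub_le (hk₁ : 1 ≤ k₁) (hs : 0 < s) (hs1 : s ≤ 1) (hC : 0 ≤ C)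
    (hr : k₁ * r ^ 2 ≤ 9 * s) (hχ : k₁ * ‖χ‖ ^ 2 ≤ s) (hp₁ : ‖p₁‖ ≤ s) (hp₂ : ‖p₂‖ ≤ s)
    {d : ℕ} {σ₁ σ₂ : Matrix (Fin n) (Fin d) ℝ} (hσ₁ : ‖σ₁‖ ≤ S) (hσ₂ : ‖σ₂‖ ≤ S)
    (hσ : ‖σ₁ - σ₂‖ ≤ C * r + s / k₁) (p : Eucl n) :
    ‖rowMul (p + (k₁ • χ + p₁)) σ₁ - rowMul (k₁ • χ + p₂) σ₂‖
      ≤ ‖rowMul p σ₁‖ + (5 * C + 1 + 2 * S) * s := by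
  have hk0 : 0 < k₁ := by linarith
  have hS : 0 ≤ S := (norm_nonneg _).trans hσ₁
  have h1 := penalty_mul_increment_le hk₁ hs hs1 hC hr hχ
  have h2 : rowMul (p + (k₁ • χ + p₁)) σ₁ - rowMul (k₁ • χ + p₂) σ₂ =
      rowMul p σ₁ + rowMul (k₁ • χ) (σ₁ - σ₂) + rowMul p₁ σ₁ - rowMul p₂ σ₂ := by
    simp only [rowMul_add, rowMul_sub]
    abel
  have h3 : ‖rowMul (k₁ • χ) (σ₁ - σ₂)‖ ≤ k₁ * ‖χ‖ * (C * r + s / k₁) := by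
    refine (norm_rowMul_le _ _).trans ?_
    rw [norm_smul, Real.norm_of_nonneg hk0.le]
    gcongr
  have h4 : ‖rowMul p₁ σ₁‖ ≤ s * S := (norm_rowMul_le _ _).trans (by gcongr)
  have h5 : ‖rowMul p₂ σ₂‖ ≤ s * S := (norm_rowMul_le _ _).trans (by gcongr)
  rw [h2]
  have e1 := norm_sub_le (rowMul p σ₁ + rowMul (k₁ • χ) (σ₁ - σ₂) + rowMul p₁ σ₁) (rowMul p₂ σ₂)
  have e2 := norm_add_le (rowMul p σ₁ + rowMul (k₁ • χ) (σ₁ - σ₂)) (rowMul p₁ σ₁)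
  have e3 := norm_add_le (rowMul p σ₁) (rowMul (k₁ • χ) (σ₁ - σ₂))
  linarith

end Penalized

theorem iSup_iInf_le_add {U V : Type*} [Nonempty U] [Nonempty V] {F₁ F₂ : U → V → ℝ} {M₁ M₂ D : ℝ}
    (h₁ : ∀ u v, |F₁ u v| ≤ M₁) (h₂ : ∀ u v, |F₂ u v| ≤ M₂)
    (h : ∀ u v, F₁ u v ≤ F₂ u v + D) : ⨆ u, ⨅ v, F₁ u v ≤ (⨆ u, ⨅ v, F₂ u v) + D := by
  have hb₁ : ∀ u, BddBelow (Set.range (F₁ u)) := fun u =>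
    ⟨-M₁, by rintro _ ⟨v, rfl⟩; exact (abs_le.1 (h₁ u v)).1⟩
  have hb₂ : ∀ u, BddBelow (Set.range (F₂ u)) := fun u =>
    ⟨-M₂, by rintro _ ⟨v, rfl⟩; exact (abs_le.1 (h₂ u v)).1⟩
  have hb : BddAbove (Set.range fun u => ⨅ v, F₂ u v) := by
    refine ⟨M₂, ?_⟩
    rintro _ ⟨u, rfl⟩
    obtain ⟨v⟩ := ‹Nonempty V›
    exact (ciInf_le (hb₂ u) v).trans (abs_le.1 (h₂ u v)).2
  refine ciSup_le fun u => ?_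
  have h3 : (⨅ v, F₁ u v) - D ≤ ⨅ v, F₂ u v := le_ciInf fun v => by
    have := ciInf_le (hb₁ u) v
    have := h u v
    linarith
  have h4 : (⨅ v, F₂ u v) ≤ ⨆ u, ⨅ v, F₂ u v := le_ciSup hb u
  linarith

theorem le_iSup_iSup_of_abs_le {U V : Type*} [Nonempty V] {F : U → V → ℝ} {M : ℝ}
    (h : ∀ u v, |F u v| ≤ M) (u : U) (v : V) : F u v ≤ ⨆ u, ⨆ v, F u v := by
  have h1 : BddAbove (Set.range (F u)) :=
    ⟨M, by rintro _ ⟨v, rfl⟩; exact (abs_le.1 (h u v)).2⟩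
  have h2 : BddAbove (Set.range fun u => ⨆ v, F u v) :=
    ⟨M, by rintro _ ⟨u, rfl⟩; exact ciSup_le fun v => (abs_le.1 (h u v)).2⟩
  exact (le_ciSup h1 v).trans (le_ciSup h2 u)

/-- Uniform modulus of continuity on bounded sets, uniform in a compact parameter. -/
theorem exists_uniform_modulus {Y W E : Type*} [NormedAddCommGroup Y] [ProperSpace Y]
    [PseudoMetricSpace W] [CompactSpace W] [PseudoMetricSpace E] {T : ℝ} {h : ℝ → Y → W → E}
    (hc : ContinuousOn (fun q : Y × ℝ × W => h q.2.1 q.1 q.2.2)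
      (Set.univ ×ˢ (Set.Icc 0 T ×ˢ Set.univ))) (R : ℝ) {ε : ℝ} (hε : 0 < ε) :
    ∃ δ > 0, ∀ t ∈ Set.Icc 0 T, ∀ t' ∈ Set.Icc 0 T, ∀ y y' w, ‖y‖ ≤ R → ‖y'‖ ≤ R →
      |t - t'| < δ → ‖y - y'‖ < δ → dist (h t y w) (h t' y' w) < ε := by
  have hK : IsCompact (Metric.closedBall (0 : Y) R ×ˢ (Set.Icc 0 T ×ˢ (Set.univ : Set W))) :=
    (isCompact_closedBall 0 R).prod (isCompact_Icc.prod isCompact_univ)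
  have hu := hK.uniformContinuousOn_of_continuous
    (hc.mono (Set.prod_mono (Set.subset_univ _) le_rfl))
  obtain ⟨δ, hδ, H⟩ := Metric.uniformContinuousOn_iff.1 hu ε hε
  refine ⟨δ, hδ, fun t ht t' ht' y y' w hy hy' htt hyy => ?_⟩
  refine H (y, t, w) ⟨by simpa using hy, ht, trivial⟩ (y', t', w) ⟨by simpa using hy', ht', trivial⟩ ?_
  rw [Prod.dist_eq, Prod.dist_eq, Real.dist_eq, dist_eq_norm, dist_self]
  exact max_lt hyy (max_lt htt hδ)

theorem continuousOn_of_lipschitz {Y W E : Type*} [NormedAddCommGroup Y]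
    [TopologicalSpace W] [PseudoMetricSpace E] {T C : ℝ} (hC : 0 ≤ C) {h : ℝ → Y → W → E}
    (hc : ∀ y, ContinuousOn (fun q : ℝ × W => h q.1 y q.2) (Set.Icc 0 T ×ˢ Set.univ))
    (hl : ∀ t ∈ Set.Icc 0 T, ∀ y y' w, dist (h t y w) (h t y' w) ≤ C * ‖y - y'‖) :
    ContinuousOn (fun q : Y × ℝ × W => h q.2.1 q.1 q.2.2)
      (Set.univ ×ˢ (Set.Icc 0 T ×ˢ Set.univ)) := by
  refine continuousOn_prod_of_continuousOn_lipschitzOnWith _ ⟨C, hC⟩ (fun y _ => hc y)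
    fun q hq => LipschitzOnWith.of_dist_le_mul fun y _ y' _ => ?_
  rw [dist_eq_norm y y']
  exact hl q.1 hq.1 y y' q.2

end Estimates

section DerivativeContinuity

variable {n : ℕ} {φ : ℝ → Eucl n → ℝ}

theorem continuous_timeDeriv (hφ : ContDiff ℝ 3 fun z : ℝ × Eucl n => φ z.1 z.2) :
    Continuous fun z : ℝ × Eucl n => timeDeriv φ z.1 z.2 := by
  have h1 : ∀ z : ℝ × Eucl n, timeDeriv φ z.1 z.2 =
      fderiv ℝ (fun z : ℝ × Eucl n => φ z.1 z.2) z (1, 0) := by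
    intro z
    have h2 := (hφ.differentiable (by norm_num)).differentiableAt (x := z) |>.hasFDerivAt
    have h3 : HasDerivAt (fun s : ℝ => (s, z.2)) ((1, 0) : ℝ × Eucl n) z.1 :=
      (hasDerivAt_id _).prodMk (hasDerivAt_const _ _)
    exact (h2.comp_hasDerivAt z.1 h3).deriv
  simp only [h1]
  exact (hφ.continuous_fderiv (by norm_num)).clm_apply continuous_const

theorem fderiv_space_eq {m : WithTop ℕ∞} (hm : m ≠ 0) {g : ℝ × Eucl n → ℝ} (hg : ContDiff ℝ m g)
    (z : ℝ × Eucl n) :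
    fderiv ℝ (fun y => g (z.1, y)) z.2 = (fderiv ℝ g z).comp (ContinuousLinearMap.inr ℝ ℝ _) := by
  have h2 := (hg.differentiable hm).differentiableAt (x := z) |>.hasFDerivAt
  exact (h2.comp z.2 (hasFDerivAt_prodMk_right z.1 z.2)).fderiv

theorem continuous_spaceGrad (hφ : ContDiff ℝ 3 fun z : ℝ × Eucl n => φ z.1 z.2) :
    Continuous fun z : ℝ × Eucl n => spaceGrad φ z.1 z.2 := by
  have h1 : ∀ z : ℝ × Eucl n, spaceGrad φ z.1 z.2 = (InnerProductSpace.toDual ℝ (Eucl n)).symm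
      ((fderiv ℝ (fun z : ℝ × Eucl n => φ z.1 z.2) z).comp (ContinuousLinearMap.inr ℝ ℝ _)) :=
    fun z => congrArg _ (fderiv_space_eq (by norm_num) hφ z)
  simp only [h1]
  exact (LinearIsometryEquiv.continuous _).comp
    ((hφ.continuous_fderiv (by norm_num)).clm_comp continuous_const)

theorem continuous_spaceHess (hφ : ContDiff ℝ 3 fun z : ℝ × Eucl n => φ z.1 z.2) :
    Continuous fun z : ℝ × Eucl n => spaceHess φ z.1 z.2 := by
  refine continuous_matrix fun i j => ?_
  set ei : Eucl n := EuclideanSpace.single i 1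
  set ej : Eucl n := EuclideanSpace.single j 1
  have h0 : ContDiff ℝ 2 fun z => fderiv ℝ (fun z : ℝ × Eucl n => φ z.1 z.2) z (0, ej) :=
    (hφ.fderiv_right (by norm_num)).clm_apply contDiff_const
  have h1 : ∀ z : ℝ × Eucl n, spaceHess φ z.1 z.2 i j =
      fderiv ℝ (fun z => fderiv ℝ (fun z : ℝ × Eucl n => φ z.1 z.2) z (0, ej)) z (0, ei) := by
    intro z
    have h2 : ∀ y, fderiv ℝ (fun y' => φ z.1 y') y ej =
        fderiv ℝ (fun z : ℝ × Eucl n => φ z.1 z.2) (z.1, y) (0, ej) := fun y =>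
      congrArg (fun L => L ej) (fderiv_space_eq (by norm_num) hφ (z.1, y))
    simp only [spaceHess, Matrix.of_apply]
    simp only [ei, ej, h2]
    exact congrArg (fun L => L ei) (fderiv_space_eq (by norm_num) h0 z)
  simp only [h1]
  exact (h0.continuous_fderiv (by norm_num)).clm_apply continuous_const

end DerivativeContinuity

section Coefficients

theorem exists_uniform_bound {Y W E : Type*} [NormedAddCommGroup Y] [ProperSpace Y]
    [TopologicalSpace W] [CompactSpace W] [SeminormedAddCommGroup E] {T : ℝ} {h : ℝ → Y → W → E}
    (hc : ContinuousOn (fun q : Y × ℝ × W => h q.2.1 q.1 q.2.2)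
      (Set.univ ×ˢ (Set.Icc 0 T ×ˢ Set.univ))) (R : ℝ) :
    ∃ S, ∀ t ∈ Set.Icc 0 T, ∀ y w, ‖y‖ ≤ R → ‖h t y w‖ ≤ S := by
  have hK : IsCompact (Metric.closedBall (0 : Y) R ×ˢ (Set.Icc 0 T ×ˢ (Set.univ : Set W))) :=
    (isCompact_closedBall 0 R).prod (isCompact_Icc.prod isCompact_univ)
  obtain ⟨S, hS⟩ := hK.exists_bound_of_continuousOn
    (hc.mono (Set.prod_mono (Set.subset_univ _) le_rfl))
  exact ⟨S, fun t ht y w hy => hS (y, t, w) ⟨by simpa using hy, ht, trivial⟩⟩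

theorem continuous_slice {Y W E : Type*} [TopologicalSpace Y] [TopologicalSpace W]
    [TopologicalSpace E] {T : ℝ} {h : ℝ → Y → W → E}
    (hc : ContinuousOn (fun q : Y × ℝ × W => h q.2.1 q.1 q.2.2)
      (Set.univ ×ˢ (Set.Icc 0 T ×ˢ Set.univ))) {t : ℝ} (ht : t ∈ Set.Icc 0 T) {y : W → Y}
    (hy : Continuous y) : Continuous fun w => h t (y w) w :=
  hc.comp_continuous (f := fun w => (y w, t, w)) (by fun_prop) fun _ => ⟨trivial, ht, trivial⟩

theorem exists_abs_le_of_continuous {U V : Type*} [TopologicalSpace U] [CompactSpace U]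
    [TopologicalSpace V] [CompactSpace V] {F : U → V → ℝ}
    (hF : Continuous fun w : U × V => F w.1 w.2) : ∃ M, ∀ u v, |F u v| ≤ M := by
  obtain ⟨M, hM⟩ := isCompact_univ.exists_bound_of_continuousOn hF.continuousOn
  exact ⟨M, fun u v => hM (u, v) trivial⟩

end Coefficients

/-- **Lemma 6.1.** If `u₁ ∈ Θ` is a viscosity subsolution and `u₂ ∈ Θ` a viscosity
supersolution of the lower Isaacs equation, and `K` is a Lipschitz constant of
`f(t,x,·,·)`, then `ω := u₁ − u₂` is a viscosity subsolution of
`∂_t ω + sup_{u,v} {½tr(σσᵀD²ω) + Dω·b + K|ω| + K|Dω·σ|} = 0` with `ω(T,·) = 0`. -/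
theorem difference_is_subsolution
    {n d : ℕ} (hn : 1 ≤ n) (hd : 1 ≤ d) {T : ℝ} (hT : 0 < T)
    {U V : Type*} [MetricSpace U] [CompactSpace U] [Nonempty U]
    [MetricSpace V] [CompactSpace V] [Nonempty V]
    (b : ℝ → Eucl n → U → V → Eucl n)
    (σ : ℝ → Eucl n → U → V → Matrix (Fin n) (Fin d) ℝ)
    (f : ℝ → Eucl n → ℝ → Eucl d → U → V → ℝ)
    (Φ : Eucl n → ℝ)
    -- (H4.1)(i): for fixed `x`, `b(·,x,·,·)` and `σ(·,x,·,·)` are continuous in `(t,u,v)`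
    (hb_cont : ∀ x : Eucl n, ContinuousOn
      (fun q : ℝ × U × V => b q.1 x q.2.1 q.2.2)
      (Set.Icc (0 : ℝ) T ×ˢ (Set.univ : Set (U × V))))
    (hσ_cont : ∀ x : Eucl n, ContinuousOn
      (fun q : ℝ × U × V => σ q.1 x q.2.1 q.2.2)
      (Set.Icc (0 : ℝ) T ×ˢ (Set.univ : Set (U × V))))
    -- (H4.1)(ii): `b` and `σ` are Lipschitz in `x`, uniformly in `(t,u,v)`
    (hbσ_lip : ∃ C > (0 : ℝ), ∀ t ∈ Set.Icc (0 : ℝ) T, ∀ (x x' : Eucl n) (u : U) (v : V),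
      ‖b t x u v - b t x' u v‖ + ‖σ t x u v - σ t x' u v‖ ≤ C * ‖x - x'‖)
    -- (H4.2)(i): for fixed `(x,y,z)`, `f(·,x,y,z,·,·)` is continuous in `(t,u,v)`
    (hf_cont : ∀ (x : Eucl n) (y : ℝ) (z : Eucl d), ContinuousOn
      (fun q : ℝ × U × V => f q.1 x y z q.2.1 q.2.2)
      (Set.Icc (0 : ℝ) T ×ˢ (Set.univ : Set (U × V))))
    -- (H4.2): `f` is Lipschitz in `(x,y,z)`, uniformly in `(t,u,v)`
    (hf_lip : ∃ C > (0 : ℝ), ∀ t ∈ Set.Icc (0 : ℝ) T,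
      ∀ (x x' : Eucl n) (y y' : ℝ) (z z' : Eucl d) (u : U) (v : V),
      |f t x y z u v - f t x' y' z' u v| ≤ C * (‖x - x'‖ + |y - y'| + ‖z - z'‖))
    -- (H4.2): `Φ` is Lipschitz
    (hΦ_lip : ∃ C > (0 : ℝ), ∀ x x' : Eucl n, |Φ x - Φ x'| ≤ C * ‖x - x'‖)
    -- `K` is a Lipschitz constant of `f(t,x,·,·)`, uniformly in `(t,x,u,v)`
    (K : ℝ) (hK : 0 ≤ K)
    (hKLip : ∀ t ∈ Set.Icc (0 : ℝ) T, ∀ (x : Eucl n) (y y' : ℝ) (z z' : Eucl d)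
      (u : U) (v : V),
      |f t x y z u v - f t x y' z' u v| ≤ K * (|y - y'| + ‖z - z'‖))
    (u₁ u₂ : ℝ → Eucl n → ℝ)
    (hu₁Θ : MemTheta T u₁) (hu₂Θ : MemTheta T u₂)
    (hsub : IsViscositySubsolution T (lowerHamiltonian b σ f) Φ u₁)
    (hsuper : IsViscositySupersolution T (lowerHamiltonian b σ f) Φ u₂) :
    IsViscositySubsolution T
      (fun t x y p X => ⨆ u : U, ⨆ v : V,
        (1 / 2) * Matrix.trace (σ t x u v * (σ t x u v)ᵀ * X)
          + ⟪p, b t x u v⟫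
          + K * |y|
          + K * ‖rowMul p (σ t x u v)‖)
      (fun _ => (0 : ℝ))
      (fun t x => u₁ t x - u₂ t x) := by
  obtain ⟨C, hC, hL⟩ := hbσ_lip
  obtain ⟨Cf, hCf, hLf⟩ := hf_lip
  refine ⟨fun x => sub_nonpos.2 ((hsub.1 x).trans (hsuper.1 x)), ?_⟩
  intro φ hφ t₀ ht₀ x₀ hmax
  have hbL : ∀ t ∈ Set.Icc 0 T, ∀ (x x' : Eucl n) (w : U × V),
      ‖b t x w.1 w.2 - b t x' w.1 w.2‖ ≤ C * ‖x - x'‖ := fun t ht x x' w =>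
    (le_add_of_nonneg_right (norm_nonneg _)).trans (hL t ht x x' w.1 w.2)
  have hσL : ∀ t ∈ Set.Icc 0 T, ∀ (x x' : Eucl n) (w : U × V),
      ‖σ t x w.1 w.2 - σ t x' w.1 w.2‖ ≤ C * ‖x - x'‖ := fun t ht x x' w =>
    (le_add_of_nonneg_left (norm_nonneg _)).trans (hL t ht x x' w.1 w.2)
  have hbJ := continuousOn_of_lipschitz (h := fun t x (w : U × V) => b t x w.1 w.2) hC.le hb_cont
    fun t ht x x' w => by rw [dist_eq_norm]; exact hbL t ht x x' w
  have hσJ := continuousOn_of_lipschitz (h := fun t x (w : U × V) => σ t x w.1 w.2) hC.le hσ_cont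
    fun t ht x x' w => by rw [dist_eq_norm]; exact hσL t ht x x' w
  have hfJ := continuousOn_of_lipschitz
    (h := fun t (y : Eucl n × Eucl d) (w : U × V) => f t y.1 0 y.2 w.1 w.2)
    (by positivity : 0 ≤ 2 * Cf) (fun y => hf_cont y.1 0 y.2) fun t ht y y' w => by
      rw [Real.dist_eq]
      refine (hLf t ht y.1 y'.1 0 0 y.2 y'.2 w.1 w.2).trans ?_
      have h1 : ‖y.1 - y'.1‖ ≤ ‖y - y'‖ := norm_fst_le (y - y')
      have h2 : ‖y.2 - y'.2‖ ≤ ‖y - y'‖ := norm_snd_le (y - y')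
      rw [sub_self, abs_zero, mul_comm 2, mul_assoc]
      gcongr
      linarith
  have hbound : ∀ t ∈ Set.Icc 0 T, ∀ (x p : Eucl n) (X : Matrix (Fin n) (Fin n) ℝ), ∃ M,
      ∀ u v, |(1 / 2) * Matrix.trace (σ t x u v * (σ t x u v)ᵀ * X) + ⟪p, b t x u v⟫
        + f t x 0 (rowMul p (σ t x u v)) u v| ≤ M := by
    intro t ht x p X
    have h1 := continuous_slice
      (h := fun t x (w : U × V) => b t x w.1 w.2) hbJ ht (continuous_const (y := x))
    have h2 := continuous_slice
      (h := fun t x (w : U × V) => σ t x w.1 w.2) hσJ ht (continuous_const (y := x))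
    have h3 := continuous_slice
      (h := fun t (y : Eucl n × Eucl d) (w : U × V) => f t y.1 0 y.2 w.1 w.2)
      hfJ ht (y := fun w => (x, rowMul p (σ t x w.1 w.2)))
      (continuous_const.prodMk (continuous_rowMul.comp (continuous_const.prodMk h2)))
    refine exists_abs_le_of_continuous ?_
    exact ((continuous_const.mul (((h2.matrix_mul h2.matrix_transpose).matrix_mul
      continuous_const).matrix_trace)).add (continuous_const.inner h1)).add h3
  set F₀ : U → V → ℝ := fun u v =>
    (1 / 2) * Matrix.trace (σ t₀ x₀ u v * (σ t₀ x₀ u v)ᵀ * spaceHess φ t₀ x₀)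
      + ⟪spaceGrad φ t₀ x₀, b t₀ x₀ u v⟫ + K * |φ t₀ x₀|
      + K * ‖rowMul (spaceGrad φ t₀ x₀) (σ t₀ x₀ u v)‖ with hF₀
  have ht₀' : t₀ ∈ Set.Icc 0 T := ⟨ht₀.1, ht₀.2.le⟩
  obtain ⟨M₀, hM₀⟩ : ∃ M, ∀ u v, |F₀ u v| ≤ M := by
    have h1 := continuous_slice
      (h := fun t x (w : U × V) => b t x w.1 w.2) hbJ ht₀' (continuous_const (y := x₀))
    have h2 := continuous_slice
      (h := fun t x (w : U × V) => σ t x w.1 w.2) hσJ ht₀' (continuous_const (y := x₀))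
    refine exists_abs_le_of_continuous ?_
    exact (((continuous_const.mul (((h2.matrix_mul h2.matrix_transpose).matrix_mul
      continuous_const).matrix_trace)).add (continuous_const.inner h1)).add continuous_const).add
      (continuous_const.mul (continuous_rowMul.comp (continuous_const.prodMk h2)).norm)
  have hG := le_iSup_iSup_of_abs_le hM₀
  change 0 ≤ timeDeriv φ t₀ x₀ + ⨆ u, ⨆ v, F₀ u v
  set G := ⨆ u, ⨆ v, F₀ u v
  refine le_of_forall_pos_le_add fun η hη => ?_
  set Λ : ℝ → Eucl n → U × V → ℝ := fun t x w => timeDeriv φ t x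
    + ((1 / 2) * Matrix.trace (σ t x w.1 w.2 * (σ t x w.1 w.2)ᵀ * spaceHess φ t x)
      + ⟪spaceGrad φ t x, b t x w.1 w.2⟫
      + K * ‖rowMul (spaceGrad φ t x) (σ t x w.1 w.2)‖) with hΛ
  have hΛJ : ContinuousOn (fun q : Eucl n × ℝ × (U × V) => Λ q.2.1 q.1 q.2.2)
      (Set.univ ×ˢ (Set.Icc 0 T ×ˢ Set.univ)) := by
    have hz : Continuous fun q : Eucl n × ℝ × (U × V) => (q.2.1, q.1) := by fun_prop
    have h1 := ((continuous_timeDeriv hφ.1).comp hz).continuousOn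
      (s := Set.univ ×ˢ (Set.Icc 0 T ×ˢ Set.univ))
    have h2 := ((continuous_spaceGrad hφ.1).comp hz).continuousOn
      (s := Set.univ ×ˢ (Set.Icc 0 T ×ˢ Set.univ))
    have h3 := ((continuous_spaceHess hφ.1).comp hz).continuousOn
      (s := Set.univ ×ˢ (Set.Icc 0 T ×ˢ Set.univ))
    have htr : Continuous fun q : Matrix (Fin n) (Fin d) ℝ × Matrix (Fin n) (Fin n) ℝ =>
        Matrix.trace (q.1 * q.1ᵀ * q.2) :=
      ((continuous_fst.matrix_mul continuous_fst.matrix_transpose).matrix_mul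
        continuous_snd).matrix_trace
    exact h1.add (((continuousOn_const.mul (htr.comp_continuousOn (hσJ.prodMk h3))).add
      (h2.inner hbJ)).add (continuousOn_const.mul
        (continuous_rowMul.comp_continuousOn (h2.prodMk hσJ)).norm))
  set R := ‖x₀‖ + 1 with hR
  obtain ⟨Sb, hSb⟩ := exists_uniform_bound (h := fun t x (w : U × V) => b t x w.1 w.2) hbJ R
  obtain ⟨Sσ, hSσ⟩ := exists_uniform_bound (h := fun t x (w : U × V) => σ t x w.1 w.2) hσJ R
  set S := max 0 (max Sb Sσ) with hS
  have hS0 : 0 ≤ S := le_max_left _ _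
  have hSb' : Sb ≤ S := (le_max_left _ _).trans (le_max_right _ _)
  have hSσ' : Sσ ≤ S := (le_max_right _ _).trans (le_max_right _ _)
  obtain ⟨δΛ, hδΛ, hΛm⟩ := exists_uniform_modulus (h := Λ) hΛJ R (half_pos hη)
  set Cst := (9 * C ^ 2 + 2 + S ^ 2 + 5 * C + 2 * S) + K * (5 * C + 1 + 2 * S) + 2 * Cf + 3
    with hCst
  have hCst0 : 0 < Cst := by positivity
  set s := min 1 (min (δΛ / 2) (η / (2 * Cst))) with hs'
  have hs : 0 < s := by positivity
  have hs1 : s ≤ 1 := min_le_left _ _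
  have hsδ : s < δΛ := by
    have : s ≤ δΛ / 2 := (min_le_right _ _).trans (min_le_left _ _)
    linarith
  have hsη : Cst * s ≤ η / 2 := by
    have : s ≤ η / (2 * Cst) := (min_le_right _ _).trans (min_le_right _ _)
    calc Cst * s ≤ Cst * (η / (2 * Cst)) := by gcongr
      _ = η / 2 := by field_simp
  obtain ⟨k₁, hk₁, H⟩ := exists_test_pair hu₁Θ.1 hu₂Θ.1 hφ.1 ht₀ hmax hs hs1
  have hk0 : 0 < k₁ := by linarith
  obtain ⟨δb, hδb, hbm⟩ := exists_uniform_modulus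
    (h := fun t x (w : U × V) => b t x w.1 w.2) hbJ R (div_pos hs hk0)
  obtain ⟨δσ, hδσ, hσm⟩ := exists_uniform_modulus
    (h := fun t x (w : U × V) => σ t x w.1 w.2) hσJ R (div_pos hs hk0)
  obtain ⟨δf, hδf, hfm⟩ := exists_uniform_modulus
    (h := fun t (y : Eucl n × Eucl d) (w : U × V) => f t y.1 0 y.2 w.1 w.2)
    hfJ (max R ((k₁ + 1) * S)) hs
  obtain ⟨t, ht, t', ht', x, x', χ, p₁, p₂, c, c₁, c₂, X₁, X₂, ψ₁, ψ₂,
    ⟨htt₀, hxx₀, htt₀', hxx₀', htt', hxx', hχ, hc₁, hc₂, hp₁, hp₂⟩,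
    ⟨hψ₁, hmax₁, hψ₁0, hψ₁t, hψ₁x, hψ₁X⟩, ⟨hψ₂, hmin₂, hψ₂0, hψ₂t, hψ₂x, hψ₂X⟩, hX⟩ :=
    H (min δb (min δσ δf) / 2) (by positivity)
  have hIt : t ∈ Set.Icc 0 T := ⟨ht.1, ht.2.le⟩
  have hIt' : t' ∈ Set.Icc 0 T := ⟨ht'.1, ht'.2.le⟩
  have hδ0 : 0 < min δb (min δσ δf) := by positivity
  have htb : |t - t'| < min δb (min δσ δf) := htt'.trans_lt (half_lt_self hδ0)
  have hδ1 : min δb (min δσ δf) ≤ δb := min_le_left _ _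
  have hδ2 : min δb (min δσ δf) ≤ δσ := (min_le_right _ _).trans (min_le_left _ _)
  have hδ3 : min δb (min δσ δf) ≤ δf := (min_le_right _ _).trans (min_le_right _ _)
  have hnorm : ∀ y : Eucl n, ‖y - x₀‖ ≤ s → ‖y‖ ≤ R := fun y hy => by
    have := norm_le_norm_add_norm_sub' y x₀
    linarith only [this, hy, hs1, hR]
  have hxR := hnorm x hxx₀
  have hxR' := hnorm x' hxx₀'
  have hχ1 : ‖χ‖ ≤ 1 := (sq_le_one_iff₀ (norm_nonneg _)).1
    ((le_mul_of_one_le_left (sq_nonneg _) hk₁).trans (hχ.trans hs1))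
  have hxx : ‖x - x'‖ ≤ 2 * s := by
    have : x - x' = (x - x₀) - (x' - x₀) := by abel
    rw [this]
    exact (norm_sub_le _ _).trans ((add_le_add hxx₀ hxx₀').trans_eq (two_mul s).symm)
  have i₁ := hsub.2 ψ₁ hψ₁ t ht x hmax₁
  have i₂ := hsuper.2 ψ₂ hψ₂ t' ht' x' hmin₂
  rw [hψ₁0, hψ₁t, hψ₁x, hψ₁X] at i₁
  rw [hψ₂0, hψ₂t, hψ₂x, hψ₂X] at i₂
  obtain ⟨M₁, hM₁⟩ := hbound t hIt x (spaceGrad φ t x + (k₁ • χ + p₁)) (spaceHess φ t x + X₁)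
  obtain ⟨M₂, hM₂⟩ := hbound t' hIt' x' (k₁ • χ + p₂) (-X₂)
  have key := iSup_iInf_le_add (D := timeDeriv φ t₀ x₀ + G + η / 2 - timeDeriv φ t x
    + (Cst - 2) * s) hM₁ hM₂ ?_
  · have e₁ := (abs_le.1 hc₁).2
    have e₂ := (abs_le.1 hc₂).1
    unfold lowerHamiltonian at i₁ i₂
    linarith only [i₁, i₂, key, e₁, e₂, hsη]
  intro u v
  have hb₁ : ‖b t x u v‖ ≤ S := (hSb t hIt x (u, v) hxR).trans hSb'
  have hb₂ : ‖b t' x' u v‖ ≤ S := (hSb t' hIt' x' (u, v) hxR').trans hSb'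
  have hσ₁ : ‖σ t x u v‖ ≤ S := (hSσ t hIt x (u, v) hxR).trans hSσ'
  have hσ₂ : ‖σ t' x' u v‖ ≤ S := (hSσ t' hIt' x' (u, v) hxR').trans hSσ'
  have hbd : ‖b t x u v - b t' x' u v‖ ≤ C * ‖x - x'‖ + s / k₁ := by
    have h1 := hbL t hIt x x' (u, v)
    have h2 := hbm t hIt t' hIt' x' x' (u, v) hxR' hxR' (htb.trans_le hδ1) (by simpa using hδb)
    rw [dist_eq_norm] at h2
    exact (norm_sub_le_norm_sub_add_norm_sub _ (b t x' u v) _).trans (add_le_add h1 h2.le)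
  have hσd : ‖σ t x u v - σ t' x' u v‖ ≤ C * ‖x - x'‖ + s / k₁ := by
    have h1 := hσL t hIt x x' (u, v)
    have h2 := hσm t hIt t' hIt' x' x' (u, v) hxR' hxR' (htb.trans_le hδ2) (by simpa using hδσ)
    rw [dist_eq_norm] at h2
    exact (norm_sub_le_norm_sub_add_norm_sub _ (σ t x' u v) _).trans (add_le_add h1 h2.le)
  have g₁ := generator_sub_le hk₁ hs hs1 hC.le hxx' hχ hp₁ hp₂ hσ₁ hσ₂ hb₁ hb₂ hσd hbd
    (hX d _ _) (spaceGrad φ t x) (spaceHess φ t x)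
  have g₂ := norm_rowMul_sub_le hk₁ hs hs1 hC.le hxx' hχ hp₁ hp₂ hσ₁ hσ₂ hσd (spaceGrad φ t x)
  set ζ₁ := rowMul (spaceGrad φ t x + (k₁ • χ + p₁)) (σ t x u v)
  set ζ₂ := rowMul (k₁ • χ + p₂) (σ t' x' u v) with hζ₂
  have hζ : ‖ζ₂‖ ≤ (k₁ + 1) * S := by
    refine (norm_rowMul_le _ _).trans ?_
    have : ‖k₁ • χ + p₂‖ ≤ k₁ + 1 := by
      refine (norm_add_le _ _).trans ?_
      rw [norm_smul, Real.norm_of_nonneg hk0.le]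
      exact add_le_add (mul_le_of_le_one_right hk0.le hχ1) (hp₂.trans hs1)
    gcongr
  have f₁ := (abs_le.1 (hKLip t hIt x 0 0 ζ₁ ζ₂ u v)).2
  have f₂ := (abs_le.1 (hLf t hIt x x' 0 0 ζ₂ ζ₂ u v)).2
  have f₃ := hfm t hIt t' hIt' (x', ζ₂) (x', ζ₂) (u, v) (max_le_max hxR' hζ) (max_le_max hxR' hζ)
    (htb.trans_le hδ3) (by simpa using hδf)
  rw [Real.dist_eq] at f₃
  have f₃' := (abs_lt.1 f₃).2
  simp only [sub_self, abs_zero, norm_zero, add_zero, zero_add] at f₁ f₂ f₃'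
  have g₃ := mul_le_mul_of_nonneg_left g₂ hK
  have f₄ := mul_le_mul_of_nonneg_left hxx hCf.le
  have l₁ := hΛm t hIt t₀ ht₀' x x₀ (u, v) hxR (by linarith only [hR]) (htt₀.trans_lt hsδ)
    (hxx₀.trans_lt hsδ)
  rw [Real.dist_eq] at l₁
  have l₂ := (abs_lt.1 l₁).2
  have l₃ := hG u v
  have l₄ : 0 ≤ K * |φ t₀ x₀| := by positivity
  simp only [hΛ] at l₂
  simp only [hF₀] at l₃
  rw [hCst]
  linarith only [g₁, g₃, f₁, f₂, f₃', f₄, l₂, l₃, l₄]
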